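/- arXiv:1802.05489 — 2 statements merged into one kernel-verified Lean document; each statement's English description precedes it below -/
import Mathlib

section
/- For every pair of measurable controls u₁ : [0,t_f] → [0,u₁max], u₂ : [0,t_f] → [0,u₂max] and every initial condition (R₀, C₀, P₀) with R₀, C₀, P₀ ≥ 0 and R₀+C₀+P₀ = N₀ > 0, there exists a unique absolutely continuous solution (R, C, P) : [0,t_f] → ℝ³ of the system R' = -λ₂R + λ₁C - γ(t)R + α₁u₁(t)P + α₂(β(t)+u₂(t))PR/N, C' = -λ₁C + λ₂R - γ(t)C + (1-α₂)(β(t)+u₂(t))PR/N + (1-α₁)u₁(t)P, P' = -(β(t)+u₂(t))PR/N - u₁(t)P + γ(t)(R+C), where N = R + C + P, with (R(0), C(0), P(0)) = (R₀, C₀, P₀), the equations holding almost everywhere; in particular the set of feasible pairs of the optimal control problem is non-empty. -/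
/-!
The three right-hand sides add up to zero, so `N = R + C + P` keeps its initial value `n > 0`. With
`N` frozen to `n` the system becomes `x' = ∑ i, c i (t) • V i (x)` with polynomial fields `V i` on
`ℝ³` and integrable nonnegative coefficients `1`, `γ`, `u₁`, `(β + u₂) / n`.

Uniqueness is Grönwall's inequality with the integrable Lipschitz constant `∑ i, |c i (t)| * K i`.
For existence, each `V i` is precomposed with a Lipschitz retraction onto the cube `[0, n]³`, which
makes it globally Lipschitz, and the Picard operator contracts a Bielecki norm weighted by the
exponential of the integral of the Lipschitz constant. The truncated system still conserves `N`, and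
each coordinate is nondecreasing wherever it is nonpositive; hence its solution never leaves the
cube, where the truncation does nothing.
-/

open Set MeasureTheory

/-- Right-hand side of the `R` equation of the controlled system. -/
noncomputable def rhsR (lam1 lam2 a1 a2 : ℝ) (beta gam u1 u2 R C P : ℝ → ℝ) (s : ℝ) : ℝ :=
  -lam2 * R s + lam1 * C s - gam s * R s + a1 * u1 s * P s
    + a2 * (beta s + u2 s) * P s * R s / (R s + C s + P s)

/-- Right-hand side of the `C` equation of the controlled system. -/
noncomputable def rhsC (lam1 lam2 a1 a2 : ℝ) (beta gam u1 u2 R C P : ℝ → ℝ) (s : ℝ) : ℝ :=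
  -lam1 * C s + lam2 * R s - gam s * C s
    + (1 - a2) * (beta s + u2 s) * P s * R s / (R s + C s + P s)
    + (1 - a1) * u1 s * P s

/-- Right-hand side of the `P` equation of the controlled system. -/
noncomputable def rhsP (lam1 lam2 a1 a2 : ℝ) (beta gam u1 u2 R C P : ℝ → ℝ) (s : ℝ) : ℝ :=
  -(beta s + u2 s) * P s * R s / (R s + C s + P s) - u1 s * P s + gam s * (R s + C s)

/-- `(R, C, P)` is an absolutely continuous (Carathéodory) solution of the controlled
system on `[0, t_f]`: the states are continuous on `[0, t_f]` and satisfy the integral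
form of the equations (equivalently, the state equations hold almost everywhere). -/
noncomputable def IsSolution (t_f lam1 lam2 a1 a2 : ℝ) (beta gam u1 u2 R C P : ℝ → ℝ) : Prop :=
  ContinuousOn R (Icc 0 t_f) ∧ ContinuousOn C (Icc 0 t_f) ∧ ContinuousOn P (Icc 0 t_f) ∧
  (∀ t ∈ Icc (0:ℝ) t_f,
    R t = R 0 + ∫ s in (0:ℝ)..t, rhsR lam1 lam2 a1 a2 beta gam u1 u2 R C P s) ∧
  (∀ t ∈ Icc (0:ℝ) t_f,
    C t = C 0 + ∫ s in (0:ℝ)..t, rhsC lam1 lam2 a1 a2 beta gam u1 u2 R C P s) ∧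
  (∀ t ∈ Icc (0:ℝ) t_f,
    P t = P 0 + ∫ s in (0:ℝ)..t, rhsP lam1 lam2 a1 a2 beta gam u1 u2 R C P s)

open scoped NNReal

/-! ### Bielecki weights -/

theorem integral_mul_exp_integral_le {a b : ℝ} {g : ℝ → ℝ} (hab : a ≤ b)
    (hg : IntervalIntegrable g volume a b) (hg₀ : ∀ s ∈ Icc a b, 0 ≤ g s) :
    ∫ s in a..b, g s * Real.exp (∫ r in a..s, g r) ≤ Real.exp (∫ r in a..b, g r) - 1 := by
  set w : ℝ → ℝ := fun t => Real.exp (∫ r in a..t, g r) with hw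
  have hmono : MonotoneOn w (uIcc a b) := by
    rw [uIcc_of_le hab]
    intro s hs t ht hst
    have hgt : IntervalIntegrable g volume a t :=
      hg.mono_set (uIcc_subset_uIcc_left (uIcc_of_le hab ▸ ht))
    refine Real.exp_le_exp.2 (intervalIntegral.integral_mono_interval le_rfl hs.1 hst ?_ hgt)
    filter_upwards [ae_restrict_mem measurableSet_Ioc] with r hr
    exact hg₀ r ⟨hr.1.le, hr.2.trans ht.2⟩
  have hderiv : ∫ s in a..b, g s * w s = ∫ s in a..b, deriv w s := by
    refine intervalIntegral.integral_congr_ae ?_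
    filter_upwards [hg.ae_hasDerivAt_integral] with s hs hsab
    rw [((hs (uIoc_subset_uIcc hsab) a left_mem_uIcc).exp).deriv, mul_comm]
  have hwa : w a = 1 := by simp [hw]
  have hle : w a ≤ w b := hmono left_mem_uIcc right_mem_uIcc hab
  have hmem := hmono.intervalIntegral_deriv_mem_uIcc
  rw [uIcc_of_le (sub_nonneg.2 hle), hwa] at hmem
  exact hderiv.trans_le hmem.2

/-- The weight of the Bielecki norm `sup ‖x t‖ / w t`, in which the Picard operator of a vector
field with Lipschitz constants `L s` is a contraction; the factor `2` makes its ratio `1 / 2`. -/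
noncomputable def bieleckiWeight (L : ℝ → ℝ≥0) (a t : ℝ) : ℝ :=
  Real.exp (∫ s in a..t, 2 * (L s : ℝ))

section Bielecki

variable {L : ℝ → ℝ≥0} {a b : ℝ}

theorem bieleckiWeight_pos (L : ℝ → ℝ≥0) (a t : ℝ) : 0 < bieleckiWeight L a t :=
  Real.exp_pos _

theorem continuousOn_bieleckiWeight (hL : IntervalIntegrable (fun s => (L s : ℝ)) volume a b) :
    ContinuousOn (bieleckiWeight L a) (uIcc a b) :=
  (intervalIntegral.continuousOn_primitive_interval' (hL.const_mul 2) left_mem_uIcc).rexp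

theorem integral_mul_bieleckiWeight_le (hab : a ≤ b)
    (hL : IntervalIntegrable (fun s => (L s : ℝ)) volume a b) :
    ∫ s in a..b, L s * bieleckiWeight L a s ≤ bieleckiWeight L a b / 2 := by
  have h : ∫ s in a..b, 2 * (L s : ℝ) * bieleckiWeight L a s ≤ bieleckiWeight L a b - 1 :=
    integral_mul_exp_integral_le hab (hL.const_mul 2) fun s _ => by positivity
  simp only [mul_assoc, intervalIntegral.integral_const_mul] at h
  linarith

theorem integral_mul_le_of_le_mul_bieleckiWeight {u : ℝ → ℝ} {m : ℝ} (hab : a ≤ b)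
    (hL : IntervalIntegrable (fun s => (L s : ℝ)) volume a b) (hu : ContinuousOn u (Icc a b))
    (hm : 0 ≤ m) (h : ∀ s ∈ Icc a b, u s ≤ m * bieleckiWeight L a s) :
    ∫ s in a..b, L s * u s ≤ m * bieleckiWeight L a b / 2 := by
  calc ∫ s in a..b, L s * u s ≤ ∫ s in a..b, m * (L s * bieleckiWeight L a s) := by
        refine intervalIntegral.integral_mono_on hab
          (hL.mul_continuousOn (by rwa [uIcc_of_le hab]))
          ((hL.mul_continuousOn (continuousOn_bieleckiWeight hL)).const_mul m) fun s hs => ?_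
        rw [mul_left_comm]
        exact mul_le_mul_of_nonneg_left (h s hs) (L s).2
    _ = m * ∫ s in a..b, L s * bieleckiWeight L a s := intervalIntegral.integral_const_mul ..
    _ ≤ m * (bieleckiWeight L a b / 2) :=
        mul_le_mul_of_nonneg_left (integral_mul_bieleckiWeight_le hab hL) hm
    _ = m * bieleckiWeight L a b / 2 := by ring

theorem nonpos_of_le_integral_mul {u : ℝ → ℝ}
    (hL : IntervalIntegrable (fun s => (L s : ℝ)) volume a b) (hu : ContinuousOn u (Icc a b))
    (h : ∀ t ∈ Icc a b, u t ≤ ∫ s in a..t, L s * u s) {t : ℝ} (ht : t ∈ Icc a b) : u t ≤ 0 := by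
  have hab : a ≤ b := ht.1.trans ht.2
  have hw : ContinuousOn (bieleckiWeight L a) (Icc a b) := by
    simpa only [uIcc_of_le hab] using continuousOn_bieleckiWeight hL
  obtain ⟨c, hc, hmax⟩ := isCompact_Icc.exists_isMaxOn ⟨t, ht⟩
    (hu.div hw fun s _ => (bieleckiWeight_pos L a s).ne')
  set m := u c / bieleckiWeight L a c
  have hle : ∀ s ∈ Icc a b, u s ≤ m * bieleckiWeight L a s := fun s hs =>
    (div_le_iff₀ (bieleckiWeight_pos L a s)).1 (hmax hs)
  have hmc : u c = m * bieleckiWeight L a c :=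
    (div_mul_cancel₀ _ (bieleckiWeight_pos L a c).ne').symm
  suffices m ≤ 0 from
    (hle t ht).trans (mul_nonpos_of_nonpos_of_nonneg this (bieleckiWeight_pos L a t).le)
  by_contra! hm₀
  have hhalf : u c ≤ m * bieleckiWeight L a c / 2 :=
    (h c hc).trans <| integral_mul_le_of_le_mul_bieleckiWeight hc.1
      (hL.mono_set (uIcc_subset_uIcc_left (uIcc_of_le hab ▸ hc)))
      (hu.mono (Icc_subset_Icc_right hc.2)) hm₀.le fun s hs => hle s ⟨hs.1, hs.2.trans hc.2⟩
  linarith [mul_pos hm₀ (bieleckiWeight_pos L a c)]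

end Bielecki

/-! ### Carathéodory solutions -/

/-- `x` is a Carathéodory solution of `x' = f(t, x)` on `[a, b]`: a continuous curve satisfying the
integral equation. Integrability of `f(t, x t)` is demanded, so that the integral is meaningful. -/
structure IsCaratheodorySolution {E : Type*} [NormedAddCommGroup E] [NormedSpace ℝ E]
    (f : ℝ → E → E) (a b : ℝ) (x : ℝ → E) : Prop where
  continuousOn : ContinuousOn x (Icc a b)
  intervalIntegrable : IntervalIntegrable (fun s => f s (x s)) volume a b
  eq_add_integral : ∀ t ∈ Icc a b, x t = x a + ∫ s in a..t, f s (x s)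

section Caratheodory

variable {E : Type*} [NormedAddCommGroup E] [NormedSpace ℝ E] {f g : ℝ → E → E} {a b : ℝ}
  {x y : ℝ → E}

theorem norm_integral_sub_integral_le_of_lipschitzOnWith {L : ℝ → ℝ≥0} {K : Set E} (hab : a ≤ b)
    (hL : IntervalIntegrable (fun s => (L s : ℝ)) volume a b)
    (hf : ∀ s ∈ Icc a b, LipschitzOnWith (L s) (f s) K)
    (hx : ContinuousOn x (Icc a b)) (hy : ContinuousOn y (Icc a b))
    (hxK : MapsTo x (Icc a b) K) (hyK : MapsTo y (Icc a b) K)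
    (hfx : IntervalIntegrable (fun s => f s (x s)) volume a b)
    (hfy : IntervalIntegrable (fun s => f s (y s)) volume a b) :
    ‖(∫ s in a..b, f s (x s)) - ∫ s in a..b, f s (y s)‖ ≤ ∫ s in a..b, L s * ‖x s - y s‖ := by
  rw [← intervalIntegral.integral_sub hfx hfy]
  refine intervalIntegral.norm_integral_le_of_norm_le hab (ae_of_all _ fun s hs => ?_)
    (hL.mul_continuousOn (by rw [uIcc_of_le hab]; exact (hx.sub hy).norm))
  have hs' := Ioc_subset_Icc_self hs
  exact (hf s hs').norm_sub_le (hxK hs') (hyK hs')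

theorem norm_integral_sub_integral_le_of_le_mul_bieleckiWeight {L : ℝ → ℝ≥0} {m : ℝ} (hab : a ≤ b)
    (hL : IntervalIntegrable (fun s => (L s : ℝ)) volume a b)
    (hf : ∀ s ∈ Icc a b, LipschitzWith (L s) (f s))
    (hx : ContinuousOn x (Icc a b)) (hy : ContinuousOn y (Icc a b))
    (hfx : IntervalIntegrable (fun s => f s (x s)) volume a b)
    (hfy : IntervalIntegrable (fun s => f s (y s)) volume a b) (hm : 0 ≤ m)
    (h : ∀ s ∈ Icc a b, ‖x s - y s‖ ≤ m * bieleckiWeight L a s) {t : ℝ} (ht : t ∈ Icc a b) :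
    ‖(∫ s in a..t, f s (x s)) - ∫ s in a..t, f s (y s)‖ ≤ m * bieleckiWeight L a t / 2 := by
  have hsub : Icc a t ⊆ Icc a b := Icc_subset_Icc_right ht.2
  have hsub' : uIcc a t ⊆ uIcc a b := uIcc_subset_uIcc_left (uIcc_of_le hab ▸ ht)
  have hLt := hL.mono_set hsub'
  calc ‖(∫ s in a..t, f s (x s)) - ∫ s in a..t, f s (y s)‖
      ≤ ∫ s in a..t, L s * ‖x s - y s‖ :=
        norm_integral_sub_integral_le_of_lipschitzOnWith ht.1 hLt
          (fun s hs => (hf s (hsub hs)).lipschitzOnWith) (hx.mono hsub) (hy.mono hsub)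
          (mapsTo_univ ..) (mapsTo_univ ..) (hfx.mono_set hsub') (hfy.mono_set hsub')
    _ ≤ m * bieleckiWeight L a t / 2 :=
        integral_mul_le_of_le_mul_bieleckiWeight ht.1 hLt ((hx.sub hy).norm.mono hsub) hm
          fun s hs => h s (hsub hs)

theorem exists_eqOn_self_of_weighted_contraction [CompleteSpace E] {w : ℝ → ℝ} {q : ℝ≥0}
    {T : (ℝ → E) → ℝ → E} (hab : a ≤ b) (hw : ContinuousOn w (Icc a b))
    (hw₀ : ∀ t ∈ Icc a b, 0 < w t) (hq : q < 1)
    (hT : ∀ x, ContinuousOn x (Icc a b) → ContinuousOn (T x) (Icc a b))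
    (hTw : ∀ x y, ContinuousOn x (Icc a b) → ContinuousOn y (Icc a b) → ∀ m : ℝ, 0 ≤ m →
      (∀ s ∈ Icc a b, ‖x s - y s‖ ≤ m * w s) → ∀ t ∈ Icc a b, ‖T x t - T y t‖ ≤ q * m * w t) :
    ∃ x, ContinuousOn x (Icc a b) ∧ EqOn (T x) x (Icc a b) := by
  -- Conjugation by `w` turns the weighted norm into the sup norm of `C(Icc a b, E)`.
  let unweight (z : C(Icc a b, E)) (s : ℝ) : E := w s • IccExtend hab z s
  have hunweight (z) : ContinuousOn (unweight z) (Icc a b) :=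
    hw.smul z.continuous.Icc_extend'.continuousOn
  let Φ (z : C(Icc a b, E)) : C(Icc a b, E) :=
    ⟨(Icc a b).domRestrict fun t => (w t)⁻¹ • T (unweight z) t,
      continuousOn_iff_continuous_domRestrict.1
        ((hw.inv₀ fun t ht => (hw₀ t ht).ne').smul (hT _ (hunweight z)))⟩
  have hΦ : ContractingWith q Φ := by
    refine ⟨hq, LipschitzWith.of_dist_le_mul fun y z => ?_⟩
    rw [ContinuousMap.dist_le (by positivity)]
    rintro ⟨t, ht⟩
    have hdist : ∀ s ∈ Icc a b, ‖unweight y s - unweight z s‖ ≤ dist y z * w s := fun s hs => by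
      rw [← smul_sub, norm_smul, Real.norm_of_nonneg (hw₀ s hs).le, mul_comm, ← dist_eq_norm]
      exact mul_le_mul_of_nonneg_right (ContinuousMap.dist_apply_le_dist _) (hw₀ s hs).le
    change dist ((w t)⁻¹ • T (unweight y) t) ((w t)⁻¹ • T (unweight z) t) ≤ q * dist y z
    rw [dist_eq_norm, ← smul_sub, norm_smul, norm_inv, Real.norm_of_nonneg (hw₀ t ht).le,
      inv_mul_le_iff₀' (hw₀ t ht)]
    exact hTw _ _ (hunweight y) (hunweight z) _ dist_nonneg hdist t ht
  have : Nonempty C(Icc a b, E) := ⟨0⟩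
  let z : C(Icc a b, E) := hΦ.fixedPoint Φ
  refine ⟨unweight z, hunweight z, fun t ht => ?_⟩
  have hfix : (w t)⁻¹ • T (unweight z) t = z ⟨t, ht⟩ :=
    DFunLike.congr_fun hΦ.fixedPoint_isFixedPt ⟨t, ht⟩
  change _ = w t • IccExtend hab z t
  rw [IccExtend_of_mem hab _ ht, ← hfix, smul_inv_smul₀ (hw₀ t ht).ne']

theorem exists_isCaratheodorySolution [CompleteSpace E] {L : ℝ → ℝ≥0} (hab : a ≤ b)
    (hL : IntervalIntegrable (fun s => (L s : ℝ)) volume a b)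
    (hf : ∀ s ∈ Icc a b, LipschitzWith (L s) (f s))
    (hint : ∀ x : ℝ → E, ContinuousOn x (Icc a b) →
      IntervalIntegrable (fun s => f s (x s)) volume a b) (x₀ : E) :
    ∃ x, IsCaratheodorySolution f a b x ∧ x a = x₀ := by
  obtain ⟨x, hx, hfix⟩ := exists_eqOn_self_of_weighted_contraction (q := 1 / 2)
    (w := bieleckiWeight L a) (T := fun x t => x₀ + ∫ s in a..t, f s (x s)) hab
    (uIcc_of_le hab ▸ continuousOn_bieleckiWeight hL) (fun t _ => bieleckiWeight_pos L a t)
    (by norm_num)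
    (fun x hx => continuousOn_const.add <| uIcc_of_le hab ▸
      intervalIntegral.continuousOn_primitive_interval' (hint x hx) left_mem_uIcc)
    (fun x y hx hy m hm hxy t ht => by
      rw [add_sub_add_left_eq_sub]
      refine (norm_integral_sub_integral_le_of_le_mul_bieleckiWeight hab hL hf hx hy
        (hint x hx) (hint y hy) hm hxy ht).trans_eq ?_
      push_cast
      ring)
  have hxa : x a = x₀ := by simp [← hfix (left_mem_Icc.2 hab)]
  exact ⟨x, ⟨hx, hint x hx, fun t ht => by rw [hxa]; exact (hfix ht).symm⟩, hxa⟩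

namespace IsCaratheodorySolution

theorem congr (hab : a ≤ b) (hx : IsCaratheodorySolution f a b x)
    (hfg : ∀ s ∈ Icc a b, f s (x s) = g s (x s)) : IsCaratheodorySolution g a b x where
  continuousOn := hx.continuousOn
  intervalIntegrable := hx.intervalIntegrable.congr fun s hs =>
    hfg s (Ioc_subset_Icc_self (uIoc_of_le hab ▸ hs))
  eq_add_integral t ht := by
    rw [hx.eq_add_integral t ht]
    congr 1
    refine intervalIntegral.integral_congr fun s hs => hfg s ?_
    rw [uIcc_of_le ht.1] at hs
    exact ⟨hs.1, hs.2.trans ht.2⟩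

theorem map_sub_map_eq_integral [CompleteSpace E] (hx : IsCaratheodorySolution f a b x)
    (φ : E →L[ℝ] ℝ) {s t : ℝ} (hs : s ∈ Icc a b) (ht : t ∈ Icc a b) :
    φ (x t) - φ (x s) = ∫ r in s..t, φ (f r (x r)) := by
  have hab : uIcc a b = Icc a b := uIcc_of_le (hs.1.trans hs.2)
  have hint {c d} (hc : c ∈ Icc a b) (hd : d ∈ Icc a b) :
      IntervalIntegrable (fun r => f r (x r)) volume c d :=
    hx.intervalIntegrable.mono_set (uIcc_subset_uIcc (hab ▸ hc) (hab ▸ hd))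
  have ha : a ∈ Icc a b := ⟨le_rfl, hs.1.trans hs.2⟩
  rw [ContinuousLinearMap.intervalIntegral_comp_comm φ (hint hs ht), ← map_sub,
    hx.eq_add_integral t ht, hx.eq_add_integral s hs, add_sub_add_left_eq_sub,
    intervalIntegral.integral_interval_sub_left (hint ha ht) (hint ha hs)]

theorem map_eq_of_map_eq_zero [CompleteSpace E] (hx : IsCaratheodorySolution f a b x)
    (φ : E →L[ℝ] ℝ) (h : ∀ s ∈ Icc a b, φ (f s (x s)) = 0) {t : ℝ} (ht : t ∈ Icc a b) :
    φ (x t) = φ (x a) := by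
  rw [← sub_eq_zero, hx.map_sub_map_eq_integral φ ⟨le_rfl, ht.1.trans ht.2⟩ ht,
    intervalIntegral.integral_zero_ae (ae_of_all _ fun s hs => ?_)]
  rw [uIoc_of_le ht.1] at hs
  exact h s ⟨hs.1.le, hs.2.trans ht.2⟩

theorem map_nonneg_of_quasipositive [CompleteSpace E] (hx : IsCaratheodorySolution f a b x)
    (φ : E →L[ℝ] ℝ) (ha : 0 ≤ φ (x a))
    (h : ∀ s ∈ Icc a b, φ (x s) ≤ 0 → 0 ≤ φ (f s (x s))) {t : ℝ} (ht : t ∈ Icc a b) :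
    0 ≤ φ (x t) := by
  by_contra! hneg
  have hcont : ContinuousOn (fun s => φ (x s)) (Icc a t) :=
    φ.continuous.comp_continuousOn (hx.continuousOn.mono (Icc_subset_Icc_right ht.2))
  obtain ⟨c, ⟨hc, hφc⟩, hlast⟩ :=
    (isCompact_Icc.of_isClosed_subset
      (hcont.preimage_isClosed_of_isClosed isClosed_Icc isClosed_Ici)
      inter_subset_left).exists_isGreatest ⟨a, left_mem_Icc.2 ht.1, ha⟩
  have hinc : φ (x t) - φ (x c) = ∫ r in c..t, φ (f r (x r)) :=
    hx.map_sub_map_eq_integral φ ⟨hc.1, hc.2.trans ht.2⟩ ht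
  have hint : 0 ≤ ∫ r in c..t, φ (f r (x r)) := by
    rw [intervalIntegral.integral_of_le hc.2]
    refine setIntegral_nonneg measurableSet_Ioc fun s hs => ?_
    have hs' : s ∈ Icc a t := ⟨hc.1.trans hs.1.le, hs.2⟩
    refine h s ⟨hs'.1, hs.2.trans ht.2⟩ (le_of_not_ge fun hφs => ?_)
    exact hs.1.not_ge (hlast ⟨hs', hφs⟩)
  exact hneg.not_ge (hφc.trans (by linarith))

theorem eqOn {L : ℝ → ℝ≥0} {K : Set E}
    (hL : IntervalIntegrable (fun s => (L s : ℝ)) volume a b)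
    (hf : ∀ s ∈ Icc a b, LipschitzOnWith (L s) (f s) K)
    (hx : IsCaratheodorySolution f a b x) (hy : IsCaratheodorySolution f a b y)
    (hxK : MapsTo x (Icc a b) K) (hyK : MapsTo y (Icc a b) K) (h : x a = y a) :
    EqOn x y (Icc a b) := by
  have hle : ∀ t ∈ Icc a b, ‖x t - y t‖ ≤ ∫ s in a..t, L s * ‖x s - y s‖ := fun t ht => by
    have hsub : Icc a t ⊆ Icc a b := Icc_subset_Icc_right ht.2
    have hsub' : uIcc a t ⊆ uIcc a b :=
      uIcc_subset_uIcc_left (uIcc_of_le (ht.1.trans ht.2) ▸ ht)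
    rw [hx.eq_add_integral t ht, hy.eq_add_integral t ht, h, add_sub_add_left_eq_sub]
    exact norm_integral_sub_integral_le_of_lipschitzOnWith ht.1 (hL.mono_set hsub')
      (fun s hs => hf s (hsub hs)) (hx.continuousOn.mono hsub) (hy.continuousOn.mono hsub)
      (hxK.mono_left hsub) (hyK.mono_left hsub) (hx.intervalIntegrable.mono_set hsub')
      (hy.intervalIntegrable.mono_set hsub')
  intro t ht
  have hnorm : ‖x t - y t‖ ≤ 0 :=
    nonpos_of_le_integral_mul hL (hx.continuousOn.sub hy.continuousOn).norm hle ht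
  exact sub_eq_zero.1 (norm_le_zero_iff.1 hnorm)

end IsCaratheodorySolution

end Caratheodory

/-! ### Control-affine vector fields -/

/-- The time-dependent vector field `∑ i, c i t • V i x`, with autonomous fields `V i` and
time-dependent scalar coefficients `c i` that need not be more than integrable. -/
def controlAffine {ι E : Type*} [Fintype ι] [AddCommMonoid E] [SMul ℝ E]
    (c : ι → ℝ → ℝ) (V : ι → E → E) (t : ℝ) (x : E) : E :=
  ∑ i, c i t • V i x

section ControlAffine

variable {ι E : Type*} [Fintype ι] [NormedAddCommGroup E] [NormedSpace ℝ E]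
  {c : ι → ℝ → ℝ} {V : ι → E → E} {a b : ℝ} {x y : ℝ → E}

theorem map_controlAffine (φ : E →L[ℝ] ℝ) (c : ι → ℝ → ℝ) (V : ι → E → E) (t : ℝ) (x : E) :
    φ (controlAffine c V t x) = ∑ i, c i t * φ (V i x) := by
  simp only [controlAffine, map_sum, map_smul, smul_eq_mul]

theorem map_controlAffine_nonneg (φ : E →L[ℝ] ℝ) {t : ℝ} {x : E} (hc : ∀ i, 0 ≤ c i t)
    (hV : ∀ i, 0 ≤ φ (V i x)) : 0 ≤ φ (controlAffine c V t x) := by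
  rw [map_controlAffine]
  exact Finset.sum_nonneg fun i _ => mul_nonneg (hc i) (hV i)

theorem intervalIntegrable_controlAffine (hab : a ≤ b)
    (hc : ∀ i, IntervalIntegrable (c i) volume a b) (hV : ∀ i, Continuous (V i))
    (hx : ContinuousOn x (Icc a b)) :
    IntervalIntegrable (fun s => controlAffine c V s (x s)) volume a b := by
  simpa only [controlAffine, Finset.sum_fn, Function.comp_apply] using
    IntervalIntegrable.sum Finset.univ fun i _ =>
      (hc i).smul_continuousOn ((hV i).comp_continuousOn (uIcc_of_le hab ▸ hx))

theorem lipschitzOnWith_controlAffine {K : ι → ℝ≥0} {S : Set E}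
    (hV : ∀ i, LipschitzOnWith (K i) (V i) S) (c : ι → ℝ → ℝ) (t : ℝ) :
    LipschitzOnWith (∑ i, ‖c i t‖₊ * K i) (controlAffine c V t) S := by
  refine LipschitzOnWith.of_dist_le_mul fun x hx y hy => ?_
  push_cast
  rw [Finset.sum_mul]
  refine (dist_sum_sum_le _ _ _).trans (Finset.sum_le_sum fun i _ => ?_)
  rw [dist_smul₀, mul_assoc]
  exact mul_le_mul_of_nonneg_left ((hV i).dist_le_mul x hx y hy) (norm_nonneg _)

theorem intervalIntegrable_sum_nnnorm_mul (hc : ∀ i, IntervalIntegrable (c i) volume a b)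
    (K : ι → ℝ≥0) :
    IntervalIntegrable (fun s => ((∑ i, ‖c i s‖₊ * K i : ℝ≥0) : ℝ)) volume a b := by
  push_cast
  simpa only [Finset.sum_fn] using
    IntervalIntegrable.sum Finset.univ fun i _ => (hc i).norm.mul_const (K i : ℝ)

theorem exists_isCaratheodorySolution_controlAffine [CompleteSpace E] {K : ι → ℝ≥0} (hab : a ≤ b)
    (hc : ∀ i, IntervalIntegrable (c i) volume a b) (hV : ∀ i, LipschitzWith (K i) (V i))
    (x₀ : E) : ∃ x, IsCaratheodorySolution (controlAffine c V) a b x ∧ x a = x₀ :=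
  exists_isCaratheodorySolution hab (intervalIntegrable_sum_nnnorm_mul hc K)
    (fun s _ => lipschitzOnWith_univ.1 <|
      lipschitzOnWith_controlAffine (fun i => (hV i).lipschitzOnWith) c s)
    (fun _ => intervalIntegrable_controlAffine hab hc fun i => (hV i).continuous) x₀

theorem exists_isCaratheodorySolution_controlAffine_comp [CompleteSpace E] {ρ : E → E} {M : ℝ≥0}
    {S : Set E} (hab : a ≤ b) (hc : ∀ i, IntervalIntegrable (c i) volume a b)
    (hV : ∀ i, LocallyLipschitz (V i)) (hρ : LipschitzWith M ρ) (hS : IsCompact S)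
    (hρS : ∀ x, ρ x ∈ S) (x₀ : E) :
    ∃ x, IsCaratheodorySolution (controlAffine c fun i => V i ∘ ρ) a b x ∧ x a = x₀ := by
  choose K hK using fun i => (hV i).locallyLipschitzOn.exists_lipschitzOnWith_of_compact hS
  exact exists_isCaratheodorySolution_controlAffine hab hc
    (fun i => lipschitzOnWith_univ.1 ((hK i).comp hρ.lipschitzOnWith fun x _ => hρS x)) x₀

theorem IsCaratheodorySolution.eqOn_of_locallyLipschitz
    (hc : ∀ i, IntervalIntegrable (c i) volume a b) (hV : ∀ i, LocallyLipschitz (V i))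
    (hx : IsCaratheodorySolution (controlAffine c V) a b x)
    (hy : IsCaratheodorySolution (controlAffine c V) a b y) (h : x a = y a) :
    EqOn x y (Icc a b) := by
  have hcompact : IsCompact (x '' Icc a b ∪ y '' Icc a b) :=
    (isCompact_Icc.image_of_continuousOn hx.continuousOn).union
      (isCompact_Icc.image_of_continuousOn hy.continuousOn)
  choose K hK using fun i =>
    (hV i).locallyLipschitzOn.exists_lipschitzOnWith_of_compact hcompact
  exact IsCaratheodorySolution.eqOn (intervalIntegrable_sum_nnnorm_mul hc K)
    (fun s _ => lipschitzOnWith_controlAffine hK c s) hx hy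
    (fun s hs => .inl (mem_image_of_mem x hs)) (fun s hs => .inr (mem_image_of_mem y hs)) h

end ControlAffine

/-! ### The compartmental system -/

/-- The autonomous fields of the system: exchange between `R` and `C`, transfer to `P` at rate `γ`,
transfer from `P` under the control `u₁`, and the bilinear interaction of `P` and `R`. The factor
`1 / N` of the interaction is left to its coefficient, which makes all four fields polynomial. -/
def compartmentField (lam1 lam2 a1 a2 : ℝ) : Fin 4 → ℝ × ℝ × ℝ → ℝ × ℝ × ℝ :=
  ![fun x => (-lam2 * x.1 + lam1 * x.2.1, -lam1 * x.2.1 + lam2 * x.1, 0),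
    fun x => (-x.1, -x.2.1, x.1 + x.2.1),
    fun x => (a1 * x.2.2, (1 - a1) * x.2.2, -x.2.2),
    fun x => (a2 * (x.2.2 * x.1), (1 - a2) * (x.2.2 * x.1), -(x.2.2 * x.1))]

/-- The coefficients of the fields `compartmentField`; `w` stands for `(β + u₂) / N`. -/
def compartmentCoeff (gam u1 w : ℝ → ℝ) : Fin 4 → ℝ → ℝ :=
  ![1, gam, u1, w]

/-- The total mass `R + C + P` as a functional of the state. -/
noncomputable def totalMass : ℝ × ℝ × ℝ →L[ℝ] ℝ :=
  .fst ℝ ℝ (ℝ × ℝ) + (.fst ℝ ℝ ℝ + .snd ℝ ℝ ℝ) ∘L .snd ℝ ℝ (ℝ × ℝ)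

section Field

variable {lam1 lam2 a1 a2 a b n : ℝ} {x₀ y : ℝ × ℝ × ℝ} {c : Fin 4 → ℝ → ℝ} {gam u1 w : ℝ → ℝ}

theorem totalMass_apply (x : ℝ × ℝ × ℝ) : totalMass x = x.1 + x.2.1 + x.2.2 := by
  simp [totalMass, add_assoc]

theorem locallyLipschitz_compartmentField (i : Fin 4) :
    LocallyLipschitz (compartmentField lam1 lam2 a1 a2 i) := by
  refine ContDiff.locallyLipschitz (𝕂 := ℝ) ?_
  fin_cases i <;> dsimp [compartmentField] <;> fun_prop

theorem totalMass_compartmentField (i : Fin 4) (x : ℝ × ℝ × ℝ) :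
    totalMass (compartmentField lam1 lam2 a1 a2 i x) = 0 := by
  rw [totalMass_apply]
  fin_cases i <;> simp [compartmentField] <;> ring

theorem intervalIntegrable_compartmentCoeff (hgam : IntervalIntegrable gam volume a b)
    (hu1 : IntervalIntegrable u1 volume a b) (hw : IntervalIntegrable w volume a b) (i : Fin 4) :
    IntervalIntegrable (compartmentCoeff gam u1 w i) volume a b := by
  fin_cases i
  exacts [intervalIntegrable_const, hgam, hu1, hw]

theorem compartmentCoeff_nonneg {s : ℝ} (hgam : 0 ≤ gam s) (hu1 : 0 ≤ u1 s) (hw : 0 ≤ w s)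
    (i : Fin 4) : 0 ≤ compartmentCoeff gam u1 w i s := by
  fin_cases i
  exacts [zero_le_one, hgam, hu1, hw]

theorem compartmentField_fst_nonneg (hlam1 : 0 ≤ lam1) (ha1 : 0 ≤ a1) (hy : 0 ≤ y)
    (h : y.1 = 0) (i : Fin 4) : 0 ≤ (compartmentField lam1 lam2 a1 a2 i y).1 := by
  have h₂ := mul_nonneg hlam1 hy.2.1
  have h₃ := mul_nonneg ha1 hy.2.2
  fin_cases i <;> simp_all [compartmentField]

theorem compartmentField_snd_fst_nonneg (hlam2 : 0 ≤ lam2) (ha1 : a1 ≤ 1) (ha2 : a2 ≤ 1)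
    (hy : 0 ≤ y) (h : y.2.1 = 0) (i : Fin 4) :
    0 ≤ (compartmentField lam1 lam2 a1 a2 i y).2.1 := by
  have h₁ := mul_nonneg hlam2 hy.1
  have h₃ := mul_nonneg (sub_nonneg.2 ha1) hy.2.2
  have h₄ := mul_nonneg (sub_nonneg.2 ha2) (mul_nonneg hy.2.2 hy.1)
  fin_cases i <;> simp_all [compartmentField]

theorem compartmentField_snd_snd_nonneg (hy : 0 ≤ y) (h : y.2.2 = 0) (i : Fin 4) :
    0 ≤ (compartmentField lam1 lam2 a1 a2 i y).2.2 := by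
  have h₂ := add_nonneg hy.1 hy.2.1
  fin_cases i <;> simp_all [compartmentField]

/-- The coordinatewise retraction of the state space onto the cube `[0, n]³`. -/
noncomputable def cubeRetraction (n : ℝ) (hn : 0 ≤ n) (x : ℝ × ℝ × ℝ) : ℝ × ℝ × ℝ :=
  (projIcc 0 n hn x.1, projIcc 0 n hn x.2.1, projIcc 0 n hn x.2.2)

theorem lipschitzWith_cubeRetraction (hn : 0 ≤ n) : LipschitzWith 1 (cubeRetraction n hn) := by
  have hproj : LipschitzWith 1 fun r => (projIcc 0 n hn r : ℝ) := LipschitzWith.projIcc hn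
  unfold cubeRetraction
  simpa using (hproj.comp .prod_fst).prodMk
    ((hproj.comp (LipschitzWith.prod_fst.comp .prod_snd)).prodMk
      (hproj.comp (LipschitzWith.prod_snd.comp .prod_snd)))

theorem cubeRetraction_mem_Icc (hn : 0 ≤ n) (x : ℝ × ℝ × ℝ) :
    cubeRetraction n hn x ∈ Icc 0 (n, n, n) :=
  ⟨⟨(projIcc 0 n hn _).2.1, (projIcc 0 n hn _).2.1, (projIcc 0 n hn _).2.1⟩,
    ⟨(projIcc 0 n hn _).2.2, (projIcc 0 n hn _).2.2, (projIcc 0 n hn _).2.2⟩⟩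

theorem cubeRetraction_of_mem (hn : 0 ≤ n) {x : ℝ × ℝ × ℝ} (hx : x ∈ Icc 0 (n, n, n)) :
    cubeRetraction n hn x = x := by
  simp only [cubeRetraction, projIcc_of_mem hn ⟨hx.1.1, hx.2.1⟩,
    projIcc_of_mem hn ⟨hx.1.2.1, hx.2.2.1⟩, projIcc_of_mem hn ⟨hx.1.2.2, hx.2.2.2⟩]

theorem mem_Icc_of_totalMass_eq (hy : 0 ≤ y) (h : totalMass y = n) : y ∈ Icc 0 (n, n, n) := by
  rw [totalMass_apply] at h
  obtain ⟨h₁, h₂, h₃⟩ : 0 ≤ y.1 ∧ 0 ≤ y.2.1 ∧ 0 ≤ y.2.2 := ⟨hy.1, hy.2.1, hy.2.2⟩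
  exact ⟨hy, by change y.1 ≤ n; linarith, by change y.2.1 ≤ n; linarith,
    by change y.2.2 ≤ n; linarith⟩

theorem IsCaratheodorySolution.totalMass_eq {ρ : ℝ × ℝ × ℝ → ℝ × ℝ × ℝ} {x : ℝ → ℝ × ℝ × ℝ}
    (hx : IsCaratheodorySolution
      (controlAffine c fun i => compartmentField lam1 lam2 a1 a2 i ∘ ρ) a b x)
    {t : ℝ} (ht : t ∈ Icc a b) : totalMass (x t) = totalMass (x a) :=
  hx.map_eq_of_map_eq_zero totalMass (fun s _ => by
    simp only [map_controlAffine, Function.comp_apply, totalMass_compartmentField, mul_zero,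
      Finset.sum_const_zero]) ht

theorem IsCaratheodorySolution.nonneg_of_cubeRetraction {x : ℝ → ℝ × ℝ × ℝ}
    (hlam1 : 0 ≤ lam1) (hlam2 : 0 ≤ lam2) (ha1 : a1 ∈ Icc (0 : ℝ) 1) (ha2 : a2 ≤ 1)
    (hc : ∀ i, ∀ s ∈ Icc a b, 0 ≤ c i s) (hn : 0 ≤ n)
    (hx : IsCaratheodorySolution (controlAffine c fun i =>
      compartmentField lam1 lam2 a1 a2 i ∘ cubeRetraction n hn) a b x)
    (hxa : 0 ≤ x a) {t : ℝ} (ht : t ∈ Icc a b) : 0 ≤ x t := by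
  have hρ (s) : 0 ≤ cubeRetraction n hn (x s) := (cubeRetraction_mem_Icc hn _).1
  have hproj {r : ℝ} (hr : r ≤ 0) : (projIcc 0 n hn r : ℝ) = 0 := by
    rw [projIcc_of_le_left hn hr]
  refine ⟨?_, ?_, ?_⟩
  · exact hx.map_nonneg_of_quasipositive (.fst ℝ ℝ (ℝ × ℝ)) hxa.1 (fun s hs hxs =>
      map_controlAffine_nonneg _ (hc · s hs)
        (compartmentField_fst_nonneg hlam1 ha1.1 (hρ s) (hproj hxs))) ht
  · exact hx.map_nonneg_of_quasipositive (.fst ℝ ℝ ℝ ∘L .snd ℝ ℝ (ℝ × ℝ)) hxa.2.1 (fun s hs hxs =>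
      map_controlAffine_nonneg _ (hc · s hs)
        (compartmentField_snd_fst_nonneg hlam2 ha1.2 ha2 (hρ s) (hproj hxs))) ht
  · exact hx.map_nonneg_of_quasipositive (.snd ℝ ℝ ℝ ∘L .snd ℝ ℝ (ℝ × ℝ)) hxa.2.2 (fun s hs hxs =>
      map_controlAffine_nonneg _ (hc · s hs)
        (compartmentField_snd_snd_nonneg (hρ s) (hproj hxs))) ht

theorem exists_isCaratheodorySolution_compartmentField (hab : a ≤ b)
    (hlam1 : 0 ≤ lam1) (hlam2 : 0 ≤ lam2) (ha1 : a1 ∈ Icc (0 : ℝ) 1) (ha2 : a2 ≤ 1)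
    (hc : ∀ i, IntervalIntegrable (c i) volume a b) (hc₀ : ∀ i, ∀ s ∈ Icc a b, 0 ≤ c i s)
    (hx₀ : 0 ≤ x₀) :
    ∃ x, IsCaratheodorySolution (controlAffine c (compartmentField lam1 lam2 a1 a2)) a b x ∧
      x a = x₀ := by
  have hn : 0 ≤ totalMass x₀ := by
    rw [totalMass_apply]
    exact add_nonneg (add_nonneg hx₀.1 hx₀.2.1) hx₀.2.2
  obtain ⟨x, hx, rfl⟩ := exists_isCaratheodorySolution_controlAffine_comp hab hc
    (locallyLipschitz_compartmentField (lam1 := lam1) (lam2 := lam2) (a1 := a1) (a2 := a2))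
    (lipschitzWith_cubeRetraction hn) isCompact_Icc (cubeRetraction_mem_Icc hn) x₀
  refine ⟨x, hx.congr hab fun s hs => ?_, rfl⟩
  have hcube : x s ∈ Icc 0 _ := mem_Icc_of_totalMass_eq
    (hx.nonneg_of_cubeRetraction hlam1 hlam2 ha1 ha2 hc₀ hn hx₀ hs) (hx.totalMass_eq hs)
  simp only [controlAffine, Function.comp_apply, cubeRetraction_of_mem hn hcube]

end Field

/-! ### Existence and uniqueness -/

section IsSolution

variable {T T' lam1 lam2 a1 a2 n : ℝ} {beta gam u1 u2 R C P R' C' P' : ℝ → ℝ}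

theorem IsSolution.mono (h : IsSolution T lam1 lam2 a1 a2 beta gam u1 u2 R C P) (hT : T' ≤ T) :
    IsSolution T' lam1 lam2 a1 a2 beta gam u1 u2 R C P :=
  have hsub : Icc 0 T' ⊆ Icc 0 T := Icc_subset_Icc_right hT
  ⟨h.1.mono hsub, h.2.1.mono hsub, h.2.2.1.mono hsub, fun t ht => h.2.2.2.1 t (hsub ht),
    fun t ht => h.2.2.2.2.1 t (hsub ht), fun t ht => h.2.2.2.2.2 t (hsub ht)⟩

theorem IsSolution.continuousOn_add (h : IsSolution T lam1 lam2 a1 a2 beta gam u1 u2 R C P) :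
    ContinuousOn (fun t => R t + C t + P t) (Icc 0 T) :=
  (h.1.add h.2.1).add h.2.2.1

theorem controlAffine_compartmentField (lam1 lam2 a1 a2 : ℝ) (beta gam u1 u2 R C P : ℝ → ℝ)
    (s : ℝ) :
    controlAffine (compartmentCoeff gam u1 fun s => (beta s + u2 s) / (R s + C s + P s))
        (compartmentField lam1 lam2 a1 a2) s (R s, C s, P s) =
      (rhsR lam1 lam2 a1 a2 beta gam u1 u2 R C P s, rhsC lam1 lam2 a1 a2 beta gam u1 u2 R C P s,
        rhsP lam1 lam2 a1 a2 beta gam u1 u2 R C P s) := by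
  simp only [controlAffine, Fin.sum_univ_four, compartmentCoeff, compartmentField, rhsR, rhsC, rhsP]
  ext <;> simp <;> ring

theorem integral_prodMk_prodMk {f g h : ℝ → ℝ} {a b : ℝ}
    (hint : IntervalIntegrable (fun s => (f s, g s, h s)) volume a b) :
    ∫ s in a..b, (f s, g s, h s) = (∫ s in a..b, f s, ∫ s in a..b, g s, ∫ s in a..b, h s) := by
  have hcomp (φ : ℝ × ℝ × ℝ →L[ℝ] ℝ) := φ.intervalIntegral_comp_comm hint
  exact Prod.ext (hcomp (.fst ℝ ℝ (ℝ × ℝ))).symm <|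
    Prod.ext (hcomp (.fst ℝ ℝ ℝ ∘L .snd ℝ ℝ (ℝ × ℝ))).symm
      (hcomp (.snd ℝ ℝ ℝ ∘L .snd ℝ ℝ (ℝ × ℝ))).symm

theorem intervalIntegrable_controlAffine_compartmentField (hT : 0 ≤ T)
    (hgam : IntervalIntegrable gam volume 0 T) (hu1 : IntervalIntegrable u1 volume 0 T)
    (hw : IntervalIntegrable (fun s => beta s + u2 s) volume 0 T)
    (hR : ContinuousOn R (Icc 0 T)) (hC : ContinuousOn C (Icc 0 T)) (hP : ContinuousOn P (Icc 0 T))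
    (hN : ∀ t ∈ Icc 0 T, R t + C t + P t ≠ 0) :
    IntervalIntegrable (fun s => controlAffine
      (compartmentCoeff gam u1 fun s => (beta s + u2 s) / (R s + C s + P s))
      (compartmentField lam1 lam2 a1 a2) s (R s, C s, P s)) volume 0 T := by
  refine intervalIntegrable_controlAffine hT (intervalIntegrable_compartmentCoeff hgam hu1 ?_)
    (fun i => (locallyLipschitz_compartmentField i).continuous) (hR.prodMk (hC.prodMk hP))
  simp only [div_eq_mul_inv]
  exact hw.mul_continuousOn (uIcc_of_le hT ▸ ((hR.add hC).add hP).inv₀ hN)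

theorem isSolution_iff_isCaratheodorySolution (hT : 0 ≤ T)
    (hgam : IntervalIntegrable gam volume 0 T) (hu1 : IntervalIntegrable u1 volume 0 T)
    (hw : IntervalIntegrable (fun s => beta s + u2 s) volume 0 T)
    (hN : ∀ t ∈ Icc 0 T, R t + C t + P t ≠ 0) :
    IsSolution T lam1 lam2 a1 a2 beta gam u1 u2 R C P ↔
      IsCaratheodorySolution
        (controlAffine (compartmentCoeff gam u1 fun s => (beta s + u2 s) / (R s + C s + P s))
          (compartmentField lam1 lam2 a1 a2)) 0 T fun t => (R t, C t, P t) := by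
  have heq (hR : ContinuousOn R (Icc 0 T)) (hC : ContinuousOn C (Icc 0 T))
      (hP : ContinuousOn P (Icc 0 T)) (t : ℝ) (ht : t ∈ Icc 0 T) :=
    integral_prodMk_prodMk <|
      ((intervalIntegrable_controlAffine_compartmentField hT hgam hu1 hw hR hC hP hN).congr
        fun s _ => controlAffine_compartmentField lam1 lam2 a1 a2 ..).mono_set
          (uIcc_subset_uIcc_left (uIcc_of_le hT ▸ ht))
  constructor
  · rintro ⟨hR, hC, hP, hRe, hCe, hPe⟩
    refine ⟨hR.prodMk (hC.prodMk hP),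
      intervalIntegrable_controlAffine_compartmentField hT hgam hu1 hw hR hC hP hN, fun t ht => ?_⟩
    simp only [controlAffine_compartmentField, heq hR hC hP t ht, Prod.mk_add_mk]
    rw [hRe t ht, hCe t ht, hPe t ht]
  · intro h
    have hR := h.continuousOn.fst
    have hC := h.continuousOn.snd.fst
    have hP := h.continuousOn.snd.snd
    have hint (t : ℝ) (ht : t ∈ Icc 0 T) := h.eq_add_integral t ht
    simp +contextual only [controlAffine_compartmentField, heq hR hC hP, Prod.mk_add_mk,
      Prod.mk.injEq] at hint
    exact ⟨hR, hC, hP, fun t ht => (hint t ht).1, fun t ht => (hint t ht).2.1,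
      fun t ht => (hint t ht).2.2⟩

theorem IsSolution.sum_eq_of_forall_ne_zero (hT : 0 ≤ T)
    (hgam : IntervalIntegrable gam volume 0 T) (hu1 : IntervalIntegrable u1 volume 0 T)
    (hw : IntervalIntegrable (fun s => beta s + u2 s) volume 0 T)
    (h : IsSolution T lam1 lam2 a1 a2 beta gam u1 u2 R C P)
    (hN : ∀ t ∈ Icc 0 T, R t + C t + P t ≠ 0) :
    R T + C T + P T = R 0 + C 0 + P 0 := by
  have hx := (isSolution_iff_isCaratheodorySolution hT hgam hu1 hw hN).1 h
  simpa only [totalMass_apply] using hx.totalMass_eq (ρ := id) ⟨hT, le_rfl⟩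

/-- Near a zero of `N` the right-hand sides may fail to be integrable, so conservation of `N` is not
immediate; but up to its first zero `N` is constant, hence by continuity there is no such zero. -/
theorem IsSolution.sum_ne_zero
    (hgam : IntervalIntegrable gam volume 0 T) (hu1 : IntervalIntegrable u1 volume 0 T)
    (hw : IntervalIntegrable (fun s => beta s + u2 s) volume 0 T)
    (h : IsSolution T lam1 lam2 a1 a2 beta gam u1 u2 R C P) (h₀ : R 0 + C 0 + P 0 ≠ 0)
    {t : ℝ} (ht : t ∈ Icc 0 T) : R t + C t + P t ≠ 0 := by
  intro hzero
  obtain ⟨b, ⟨hb, hNb⟩, hfirst⟩ := (isCompact_Icc.of_isClosed_subset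
    (h.continuousOn_add.preimage_isClosed_of_isClosed isClosed_Icc isClosed_singleton)
    inter_subset_left).exists_isLeast ⟨t, ht, hzero⟩
  have hb₀ : 0 ≠ b := by
    rintro rfl
    exact h₀ hNb
  have hconst : EqOn (fun s => R s + C s + P s) (fun _ => R 0 + C 0 + P 0) (Ico 0 b) := by
    intro s hs
    have hsT : s ≤ T := hs.2.le.trans hb.2
    have hsub : uIcc 0 s ⊆ uIcc 0 T := uIcc_subset_uIcc_left (mem_uIcc_of_le hs.1 hsT)
    refine (h.mono hsT).sum_eq_of_forall_ne_zero hs.1 (hgam.mono_set hsub) (hu1.mono_set hsub)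
      (hw.mono_set hsub) fun r hr hNr => ?_
    exact (hr.2.trans_lt hs.2).not_ge (hfirst ⟨⟨hr.1, hr.2.trans hsT⟩, hNr⟩)
  have hconst' := hconst.of_subset_closure
    (h.continuousOn_add.mono (Icc_subset_Icc_right hb.2)) continuousOn_const Ico_subset_Icc_self
    (closure_Ico hb₀).ge
  exact h₀ ((hconst' ⟨hb.1, le_rfl⟩).symm.trans hNb)

theorem IsSolution.sum_eq
    (hgam : IntervalIntegrable gam volume 0 T) (hu1 : IntervalIntegrable u1 volume 0 T)
    (hw : IntervalIntegrable (fun s => beta s + u2 s) volume 0 T)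
    (h : IsSolution T lam1 lam2 a1 a2 beta gam u1 u2 R C P) (h₀ : R 0 + C 0 + P 0 ≠ 0)
    {t : ℝ} (ht : t ∈ Icc 0 T) : R t + C t + P t = R 0 + C 0 + P 0 := by
  have hsub : uIcc 0 t ⊆ uIcc 0 T := uIcc_subset_uIcc_left (mem_uIcc_of_le ht.1 ht.2)
  exact (h.mono ht.2).sum_eq_of_forall_ne_zero ht.1 (hgam.mono_set hsub) (hu1.mono_set hsub)
    (hw.mono_set hsub) fun s hs => h.sum_ne_zero hgam hu1 hw h₀ ⟨hs.1, hs.2.trans ht.2⟩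

theorem isSolution_iff_of_sum_eq (hT : 0 ≤ T) (hn : n ≠ 0)
    (hgam : IntervalIntegrable gam volume 0 T) (hu1 : IntervalIntegrable u1 volume 0 T)
    (hw : IntervalIntegrable (fun s => beta s + u2 s) volume 0 T)
    (hN : ∀ t ∈ Icc 0 T, R t + C t + P t = n) :
    IsSolution T lam1 lam2 a1 a2 beta gam u1 u2 R C P ↔
      IsCaratheodorySolution (controlAffine (compartmentCoeff gam u1 fun s => (beta s + u2 s) / n)
        (compartmentField lam1 lam2 a1 a2)) 0 T fun t => (R t, C t, P t) := by
  have hfield : ∀ s ∈ Icc 0 T,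
      controlAffine (compartmentCoeff gam u1 fun s => (beta s + u2 s) / (R s + C s + P s))
          (compartmentField lam1 lam2 a1 a2) s (R s, C s, P s) =
        controlAffine (compartmentCoeff gam u1 fun s => (beta s + u2 s) / n)
          (compartmentField lam1 lam2 a1 a2) s (R s, C s, P s) := fun s hs => by
    simp only [controlAffine, compartmentCoeff, Fin.sum_univ_four, hN s hs, Matrix.cons_val]
  rw [isSolution_iff_isCaratheodorySolution hT hgam hu1 hw fun t ht => (hN t ht).trans_ne hn]
  exact ⟨fun h => h.congr hT hfield, fun h => h.congr hT fun s hs => (hfield s hs).symm⟩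

end IsSolution

theorem existence_uniqueness_of_solution_general
    {t_f lam1 lam2 a1 a2 R0 C0 P0 : ℝ} {beta gam u1 u2 : ℝ → ℝ} (ht_f : 0 ≤ t_f)
    (hlam1 : 0 ≤ lam1) (hlam2 : 0 ≤ lam2) (ha1 : a1 ∈ Icc (0 : ℝ) 1) (ha2 : a2 ≤ 1)
    (hbeta : IntervalIntegrable beta volume 0 t_f) (hgam : IntervalIntegrable gam volume 0 t_f)
    (hu1 : IntervalIntegrable u1 volume 0 t_f) (hu2 : IntervalIntegrable u2 volume 0 t_f)
    (hbeta₀ : ∀ t ∈ Icc 0 t_f, 0 ≤ beta t) (hgam₀ : ∀ t ∈ Icc 0 t_f, 0 ≤ gam t)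
    (hu1₀ : ∀ t ∈ Icc 0 t_f, 0 ≤ u1 t) (hu2₀ : ∀ t ∈ Icc 0 t_f, 0 ≤ u2 t)
    (hR0 : 0 ≤ R0) (hC0 : 0 ≤ C0) (hP0 : 0 ≤ P0) (hpos : 0 < R0 + C0 + P0) :
    ∃ R C P : ℝ → ℝ,
      (IsSolution t_f lam1 lam2 a1 a2 beta gam u1 u2 R C P ∧
        R 0 = R0 ∧ C 0 = C0 ∧ P 0 = P0) ∧
      ∀ R' C' P' : ℝ → ℝ,
        (IsSolution t_f lam1 lam2 a1 a2 beta gam u1 u2 R' C' P' ∧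
          R' 0 = R0 ∧ C' 0 = C0 ∧ P' 0 = P0) →
        ∀ t ∈ Icc 0 t_f, R' t = R t ∧ C' t = C t ∧ P' t = P t := by
  set n := R0 + C0 + P0
  have hw : IntervalIntegrable (fun s => beta s + u2 s) volume 0 t_f := hbeta.add hu2
  have hc := intervalIntegrable_compartmentCoeff hgam hu1 (hw.div_const n)
  have hw₀ : ∀ s ∈ Icc 0 t_f, 0 ≤ (beta s + u2 s) / n := fun s hs =>
    div_nonneg (add_nonneg (hbeta₀ s hs) (hu2₀ s hs)) hpos.le
  obtain ⟨x, hx, hx0⟩ := exists_isCaratheodorySolution_compartmentField (x₀ := (R0, C0, P0))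
    ht_f hlam1 hlam2 ha1 ha2 hc
    (fun i s hs => compartmentCoeff_nonneg (hgam₀ s hs) (hu1₀ s hs) (hw₀ s hs) i) ⟨hR0, hC0, hP0⟩
  have hN : ∀ t ∈ Icc 0 t_f, (x t).1 + (x t).2.1 + (x t).2.2 = n := fun t ht => by
    simpa only [totalMass_apply, hx0] using hx.totalMass_eq (ρ := id) ht
  refine ⟨fun t => (x t).1, fun t => (x t).2.1, fun t => (x t).2.2,
    ⟨(isSolution_iff_of_sum_eq ht_f hpos.ne' hgam hu1 hw hN).2 hx, by simp [hx0]⟩, ?_⟩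
  rintro R' C' P' ⟨h, rfl, rfl, rfl⟩ t ht
  have hy := (isSolution_iff_of_sum_eq ht_f hpos.ne' hgam hu1 hw
    fun s hs => h.sum_eq hgam hu1 hw hpos.ne' hs).1 h
  have hxy : (R' t, C' t, P' t) = x t :=
    hy.eqOn_of_locallyLipschitz hc locallyLipschitz_compartmentField hx hx0.symm ht
  simp only [← hxy, and_self]

theorem intervalIntegrable_of_measurable_of_mem_Icc {u : ℝ → ℝ} {a b m M : ℝ} (hab : a ≤ b)
    (hu : Measurable u) (h : ∀ t ∈ Icc a b, u t ∈ Icc m M) : IntervalIntegrable u volume a b := by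
  refine (intervalIntegrable_iff_integrableOn_Icc_of_le hab).2 ?_
  exact Measure.integrableOn_of_bounded (M := max |m| |M|) (by simp) hu.aestronglyMeasurable
    ((ae_restrict_mem measurableSet_Icc).mono fun t ht =>
      abs_le_max_abs_abs (h t ht).1 (h t ht).2)

/-- For every admissible measurable control pair and every initial condition on the simplex,
there is a unique absolutely continuous solution of the controlled system on `[0, t_f]`;
in particular the set of feasible pairs of the optimal control problem is non-empty. -/
theorem existence_uniqueness_of_solution
    (t_f lam1 lam2 a1 a2 u1max u2max R0 C0 P0 N0 : ℝ)
    (ht_f : 0 < t_f)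
    (hlam1 : 0 ≤ lam1) (hlam2 : 0 ≤ lam2)
    (ha1 : a1 ∈ Icc (0:ℝ) 1) (ha2 : a2 ∈ Icc (0:ℝ) 1)
    (beta gam u1 u2 : ℝ → ℝ)
    (hbeta_cont : ContinuousOn beta (Icc 0 t_f))
    (hbeta_nonneg : ∀ t ∈ Icc (0:ℝ) t_f, 0 ≤ beta t)
    (hgam_cont : ContinuousOn gam (Icc 0 t_f))
    (hgam_nonneg : ∀ t ∈ Icc (0:ℝ) t_f, 0 ≤ gam t)
    (hu1_meas : Measurable u1) (hu2_meas : Measurable u2)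
    (hu1_range : ∀ t ∈ Icc (0:ℝ) t_f, u1 t ∈ Icc 0 u1max)
    (hu2_range : ∀ t ∈ Icc (0:ℝ) t_f, u2 t ∈ Icc 0 u2max)
    (hR0 : 0 ≤ R0) (hC0 : 0 ≤ C0) (hP0 : 0 ≤ P0)
    (hsum : R0 + C0 + P0 = N0) (hN0 : 0 < N0) :
    ∃ R C P : ℝ → ℝ,
      (IsSolution t_f lam1 lam2 a1 a2 beta gam u1 u2 R C P ∧
        R 0 = R0 ∧ C 0 = C0 ∧ P 0 = P0) ∧
      ∀ R' C' P' : ℝ → ℝ,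
        (IsSolution t_f lam1 lam2 a1 a2 beta gam u1 u2 R' C' P' ∧
          R' 0 = R0 ∧ C' 0 = C0 ∧ P' 0 = P0) →
        ∀ t ∈ Icc (0:ℝ) t_f, R' t = R t ∧ C' t = C t ∧ P' t = P t := by
  subst hsum
  exact existence_uniqueness_of_solution_general ht_f.le hlam1 hlam2 ha1 ha2.2
    (hbeta_cont.intervalIntegrable_of_Icc ht_f.le) (hgam_cont.intervalIntegrable_of_Icc ht_f.le)
    (intervalIntegrable_of_measurable_of_mem_Icc ht_f.le hu1_meas hu1_range)
    (intervalIntegrable_of_measurable_of_mem_Icc ht_f.le hu2_meas hu2_range)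
    hbeta_nonneg hgam_nonneg (fun t ht => (hu1_range t ht).1) (fun t ht => (hu2_range t ht).1)
    hR0 hC0 hP0 hN0
end

section
/- There exists an optimal control pair (u₁*, u₂*) with measurable u₁* : [0,t_f] → [0,u₁max], u₂* : [0,t_f] → [0,u₂max], and a corresponding absolutely continuous solution (R*, C*, P*) of the system R' = -λ₂R + λ₁C - γ(t)R + α₁u₁(t)P + α₂(β(t)+u₂(t))PR/N, C' = -λ₁C + λ₂R - γ(t)C + (1-α₂)(β(t)+u₂(t))PR/N + (1-α₁)u₁(t)P, P' = -(β(t)+u₂(t))PR/N - u₁(t)P + γ(t)(R+C) with N = R+C+P and initial condition (R(0),C(0),P(0)) = (R₀,C₀,P₀), such that the cost J(P*, u₁*, u₂*) = ∫₀^{t_f} κ₁P* + κ₂(u₁*)² + κ₃(u₂*)² dt is less than or equal to J(P, u₁, u₂) for every feasible pair, i.e., for every measurable control pair (u₁, u₂) with values in [0,u₁max] × [0,u₂max] together with the corresponding absolutely continuous solution (R, C, P) of the same initial value problem. -/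
open Set MeasureTheory

/-- A feasible pair of the optimal control problem: measurable controls with values in
`[0,u₁max] × [0,u₂max]` on `[0,t_f]` together with a corresponding absolutely continuous
solution of the state equations with the prescribed initial conditions. -/
noncomputable def Feasible (t_f lam1 lam2 a1 a2 u1max u2max R0 C0 P0 : ℝ)
    (beta gam u1 u2 R C P : ℝ → ℝ) : Prop :=
  Measurable u1 ∧ Measurable u2 ∧
  (∀ t ∈ Icc (0:ℝ) t_f, u1 t ∈ Icc 0 u1max) ∧
  (∀ t ∈ Icc (0:ℝ) t_f, u2 t ∈ Icc 0 u2max) ∧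
  IsSolution t_f lam1 lam2 a1 a2 beta gam u1 u2 R C P ∧
  R 0 = R0 ∧ C 0 = C0 ∧ P 0 = P0

/-- The cost functional `J(P,u₁,u₂) = ∫₀^{t_f} κ₁P + κ₂u₁² + κ₃u₂² dt`. -/
noncomputable def cost (t_f k1 k2 k3 : ℝ) (P u1 u2 : ℝ → ℝ) : ℝ :=
  ∫ t in (0:ℝ)..t_f, (k1 * P t + k2 * u1 t ^ 2 + k3 * u2 t ^ 2)

open Filter Topology
open scoped NNReal ENNReal

/-!
The rates `1, γ, β, u₁, u₂` enter the state equations linearly, each of them multiplying a vector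
field which conserves the total `R + C + P` and does not point out of the nonnegative orthant. So
every state stays in a fixed compact set, on which the quotient `P R / N` has a constant
denominator, and all states are uniformly Lipschitz. Along an ultrafilter on the feasible pairs
that concentrates on ever smaller costs, the controls converge weakly in `L²` and the states
uniformly (Arzelà–Ascoli). Linearity in the rates makes the limit state a solution for the limit
controls, and convexity of the cost in the controls makes the cost weakly lower semicontinuous.
-/

section RealAnalysis

variable {a b : ℝ}

lemma hasDerivWithinAt_primitive {f : ℝ → ℝ} (hf : ContinuousOn f (Icc a b)) {x : ℝ}
    (hx : x ∈ Ico a b) : HasDerivWithinAt (fun t => ∫ s in a..t, f s) (f x) (Ici x) x := by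
  have hfx : ContinuousWithinAt f (Ioi x) x := by
    have hright : ContinuousWithinAt f (Ico x b) x :=
      (hf x (Ico_subset_Icc_self hx)).mono fun s hs => ⟨hx.1.trans hs.1, hs.2.le⟩
    exact (hright.mono_of_mem_nhdsWithin (Ico_mem_nhdsGE hx.2)).mono Ioi_subset_Ici_self
  have hmeas : StronglyMeasurableAtFilter f (𝓝[>] x) :=
    ⟨Ioc x b, Ioc_mem_nhdsGT hx.2, (hf.mono fun s hs =>
      ⟨hx.1.trans hs.1.le, hs.2⟩).aestronglyMeasurable measurableSet_Ioc⟩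
  refine intervalIntegral.integral_hasDerivWithinAt_right ?_ hmeas hfx
  exact (hf.mono (Icc_subset_Icc_right hx.2.le)).intervalIntegrable_of_Icc hx.1

lemma eq_zero_of_le_mul_integral {K : ℝ} {w : ℝ → ℝ} (hw : ContinuousOn w (Icc a b))
    (hw0 : ∀ t ∈ Icc a b, 0 ≤ w t) (hle : ∀ t ∈ Icc a b, w t ≤ K * ∫ s in a..t, w s) :
    ∀ t ∈ Icc a b, w t = 0 := by
  intro t ht
  have hint_nonneg : ∀ r ∈ Icc a b, 0 ≤ ∫ s in a..r, w s := fun r hr =>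
    intervalIntegral.integral_nonneg hr.1 fun s hs => hw0 s ⟨hs.1, hs.2.trans hr.2⟩
  have hint_cont : ContinuousOn (fun r => ∫ s in a..r, w s) (Icc a b) := by
    rw [← uIcc_of_le (ht.1.trans ht.2)]
    exact intervalIntegral.continuousOn_primitive_interval
      (by rw [uIcc_of_le (ht.1.trans ht.2)]; exact hw.integrableOn_Icc)
  have hint_zero : ∫ s in a..t, w s = 0 := by
    refine eq_zero_of_abs_deriv_le_mul_abs_self_of_eq_zero_right (K := K) hint_cont
      (fun x hx => hasDerivWithinAt_primitive hw hx) intervalIntegral.integral_same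
      (fun x hx => ?_) t ht
    have hx' := Ico_subset_Icc_self hx
    rw [Real.norm_of_nonneg (hw0 x hx'), Real.norm_of_nonneg (hint_nonneg x hx')]
    exact hle x hx'
  exact le_antisymm ((hle t ht).trans_eq (by rw [hint_zero, mul_zero])) (hw0 t ht)

lemma exists_last_nonneg {x : ℝ → ℝ} (hab : a ≤ b) (hx : ContinuousOn x (Icc a b))
    (hxa : 0 ≤ x a) : ∃ r ∈ Icc a b, 0 ≤ x r ∧ ∀ s ∈ Ioc r b, x s < 0 := by
  have hcompact : IsCompact (Icc a b ∩ x ⁻¹' Ici 0) :=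
    isCompact_Icc.of_isClosed_subset
      (hx.preimage_isClosed_of_isClosed isClosed_Icc isClosed_Ici) inter_subset_left
  obtain ⟨r, ⟨hr, hxr⟩, hmax⟩ := hcompact.exists_isGreatest ⟨a, left_mem_Icc.2 hab, hxa⟩
  refine ⟨r, hr, hxr, fun s hs => lt_of_not_ge fun hxs => ?_⟩
  exact hs.1.not_ge (hmax ⟨⟨hr.1.trans hs.1.le, hs.2⟩, hxs⟩)

lemma negPart_le_integral {x f g : ℝ → ℝ} (hx : ContinuousOn x (Icc a b))
    (hf : IntegrableOn f (Icc a b)) (hg : IntegrableOn g (Icc a b))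
    (hg0 : ∀ t ∈ Icc a b, 0 ≤ g t) (hxf : ∀ t ∈ Icc a b, x t = x a + ∫ s in a..t, f s)
    (hxa : 0 ≤ x a) (hfg : ∀ s ∈ Icc a b, x s < 0 → -f s ≤ g s) :
    ∀ t ∈ Icc a b, (x t)⁻ ≤ ∫ s in a..t, g s := by
  intro t ht
  have hsub : Icc a t ⊆ Icc a b := Icc_subset_Icc_right ht.2
  obtain ⟨r, hr, hxr, hneg⟩ := exists_last_nonneg ht.1 (hx.mono hsub) hxa
  have hinterval {h : ℝ → ℝ} (hh : IntegrableOn h (Icc a b)) {c d : ℝ} (hc : c ∈ Icc a t)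
      (hd : d ∈ Icc a t) : IntervalIntegrable h volume c d :=
    (hh.mono_set ((uIcc_subset_Icc hc hd).trans hsub)).intervalIntegrable
  have hta : t ∈ Icc a t := right_mem_Icc.2 ht.1
  have haa : a ∈ Icc a t := left_mem_Icc.2 ht.1
  have hg0' : 0 ≤ᵐ[volume.restrict (Ioc a t)] g :=
    ae_restrict_of_forall_mem measurableSet_Ioc fun s hs => hg0 s (hsub (Ioc_subset_Icc_self hs))
  rw [negPart_def]
  refine max_le ?_ (intervalIntegral.integral_nonneg_of_ae_restrict ht.1 ?_)
  · calc -x t ≤ x r - x t := by linarith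
      _ = ∫ s in r..t, -f s := by
        rw [hxf t ht, hxf r (hsub hr), intervalIntegral.integral_neg,
          ← intervalIntegral.integral_interval_sub_left (hinterval hf haa hta)
            (hinterval hf haa hr)]
        ring
      _ ≤ ∫ s in r..t, g s := by
        refine intervalIntegral.integral_mono_on_of_le_Ioo hr.2 (hinterval hf hr hta).neg
          (hinterval hg hr hta) fun s hs => ?_
        exact hfg s (hsub ⟨hr.1.trans hs.1.le, hs.2.le⟩) (hneg s ⟨hs.1, hs.2.le⟩)
      _ ≤ ∫ s in a..t, g s :=
        intervalIntegral.integral_mono_interval hr.1 hr.2 le_rfl hg0' (hinterval hg haa hta)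
  · exact ae_restrict_of_forall_mem measurableSet_Icc fun s hs => hg0 s (hsub hs)

lemma eqOn_const_of_eq_while_pos {N : ℝ → ℝ} (hN : ContinuousOn N (Icc a b)) (hNa : 0 < N a)
    (h : ∀ t ∈ Icc a b, (∀ s ∈ Icc a t, 0 < N s) → N t = N a) :
    EqOn N (fun _ => N a) (Icc a b) := by
  suffices hpos : ∀ t ∈ Icc a b, 0 < N t from fun t ht =>
    h t ht fun s hs => hpos s ⟨hs.1, hs.2.trans ht.2⟩
  by_contra! hexists
  have hcompact : IsCompact (Icc a b ∩ N ⁻¹' Iic 0) :=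
    isCompact_Icc.of_isClosed_subset
      (hN.preimage_isClosed_of_isClosed isClosed_Icc isClosed_Iic) inter_subset_left
  obtain ⟨r, ⟨hr, hNr⟩, hmin⟩ := hcompact.exists_isLeast hexists
  have hpos : ∀ s ∈ Ico a r, 0 < N s := fun s hs =>
    lt_of_not_ge fun hNs => hs.2.not_ge (hmin ⟨⟨hs.1, hs.2.le.trans hr.2⟩, hNs⟩)
  have har : a ≠ r := by rintro rfl; exact hNa.not_ge hNr
  have hconst : EqOn N (fun _ => N a) (Ico a r) := fun t ht =>
    h t ⟨ht.1, ht.2.le.trans hr.2⟩ fun s hs => hpos s ⟨hs.1, hs.2.trans_lt ht.2⟩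
  have hNr' : N r = N a := hconst.of_subset_closure (hN.mono (Icc_subset_Icc_right hr.2))
    continuousOn_const Ico_subset_Icc_self (closure_Ico har).ge (right_mem_Icc.2 hr.1)
  exact hNa.not_ge (hNr'.symm.trans_le hNr)

lemma memLp_Icc_of_continuousOn {f : ℝ → ℝ} (hf : ContinuousOn f (Icc a b)) {p : ℝ≥0∞} :
    MemLp f p (volume.restrict (Icc a b)) := by
  obtain ⟨C, hC⟩ := isCompact_Icc.exists_bound_of_continuousOn hf
  exact MemLp.of_bound (hf.aestronglyMeasurable measurableSet_Icc) C
    (ae_restrict_of_forall_mem measurableSet_Icc hC)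

lemma memLp_Icc_of_mem_Icc {f : ℝ → ℝ} (hf : Measurable f) {M : ℝ}
    (hfM : ∀ t ∈ Icc a b, f t ∈ Icc 0 M) {p : ℝ≥0∞} : MemLp f p (volume.restrict (Icc a b)) := by
  refine MemLp.of_bound hf.aestronglyMeasurable M (ae_restrict_of_forall_mem measurableSet_Icc
    fun t ht => ?_)
  rw [Real.norm_of_nonneg (hfM t ht).1]
  exact (hfM t ht).2

end RealAnalysis

section WeakConvergence

variable {ι Ω : Type*} [MeasurableSpace Ω] {μ : Measure Ω} {f : ι → Ω → ℝ} {φ : Ω → ℝ}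

/-- Weak `L²(μ)` convergence of `f i` to `φ` along `l`, tested against genuine functions so that
no passage to `Lp` classes is needed. -/
def TendstoWeakly (μ : Measure Ω) (l : Filter ι) (f : ι → Ω → ℝ) (φ : Ω → ℝ) : Prop :=
  ∀ g : Ω → ℝ, MemLp g 2 μ →
    Tendsto (fun i => ∫ x, f i x * g x ∂μ) l (𝓝 (∫ x, φ x * g x ∂μ))

lemma TendstoWeakly.const {l : Filter ι} (f : Ω → ℝ) : TendstoWeakly μ l (fun _ => f) f :=
  fun _ _ => tendsto_const_nhds

lemma exists_tendsto_inner {H : Type*} [NormedAddCommGroup H] [InnerProductSpace ℝ H]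
    [CompleteSpace H] (l : Ultrafilter ι) {v : ι → H} {r : ℝ} (hv : ∀ i, ‖v i‖ ≤ r) :
    ∃ w : H, ∀ z, Tendsto (fun i => inner ℝ (v i) z) l (𝓝 (inner ℝ w z)) := by
  set Ψ : ι → WeakDual ℝ H := fun i =>
    StrongDual.toWeakDual (InnerProductSpace.toDual ℝ H (v i))
  have hΨ : ∀ i, Ψ i ∈ WeakDual.toStrongDual ⁻¹' Metric.closedBall (0 : StrongDual ℝ H) r :=
    fun i => mem_closedBall_zero_iff.2
      (((InnerProductSpace.toDual ℝ H).norm_map (v i)).trans_le (hv i))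
  obtain ⟨ψ, -, hψ⟩ := (WeakDual.isCompact_closedBall (𝕜 := ℝ) (E := H) 0 r).ultrafilter_le_nhds
    (l.map Ψ) (le_principal_iff.2 (mem_map.2 (univ_mem' hΨ)))
  refine ⟨(InnerProductSpace.toDual ℝ H).symm (WeakDual.toStrongDual ψ), fun z => ?_⟩
  rw [InnerProductSpace.toDual_symm_apply]
  exact ((WeakDual.eval_continuous z).tendsto ψ).comp hψ

lemma exists_tendstoWeakly_of_eLpNorm_le (l : Ultrafilter ι) (hf : ∀ i, MemLp (f i) 2 μ)
    {r : ℝ≥0} (hr : ∀ i, eLpNorm (f i) 2 μ ≤ r) : ∃ φ, MemLp φ 2 μ ∧ TendstoWeakly μ l f φ := by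
  have hinner {a b : Ω → ℝ} (ha : MemLp a 2 μ) (hb : MemLp b 2 μ) :
      inner ℝ (ha.toLp a) (hb.toLp b) = ∫ x, a x * b x ∂μ := by
    rw [L2.inner_def]
    refine integral_congr_ae ?_
    filter_upwards [ha.coeFn_toLp, hb.coeFn_toLp] with x hax hbx
    rw [hax, hbx, RCLike.inner_apply, conj_trivial, mul_comm]
  obtain ⟨w, hw⟩ := exists_tendsto_inner l (v := fun i => (hf i).toLp (f i)) (r := r) fun i => by
    rw [Lp.norm_toLp]
    exact ENNReal.toReal_le_coe_of_le_coe (hr i)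
  refine ⟨w, Lp.memLp w, fun g hg => ?_⟩
  simpa only [hinner, ← hinner (Lp.memLp w) hg, Lp.toLp_coeFn] using hw (hg.toLp g)

lemma TendstoWeakly.congr_ae {l : Filter ι} {ψ : Ω → ℝ} (hw : TendstoWeakly μ l f φ)
    (hφψ : φ =ᵐ[μ] ψ) : TendstoWeakly μ l f ψ := fun g hg => by
  have hmul : ∫ x, φ x * g x ∂μ = ∫ x, ψ x * g x ∂μ :=
    integral_congr_ae (hφψ.mul (EventuallyEq.refl _ g))
  exact hmul ▸ hw g hg

lemma TendstoWeakly.restrict {l : Filter ι} (hw : TendstoWeakly μ l f φ) {s : Set Ω}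
    (hs : MeasurableSet s) : TendstoWeakly (μ.restrict s) l f φ := fun g hg => by
  have hindicator (u : Ω → ℝ) : ∫ x, u x * s.indicator g x ∂μ = ∫ x in s, u x * g x ∂μ := by
    rw [← integral_indicator hs]
    simp only [← indicator_mul_right]
  simpa only [hindicator] using hw _ ((memLp_indicator_iff_restrict hs).2 hg)

lemma two_mul_integral_mul_sub_le {u v : Ω → ℝ} (hu : MemLp u 2 μ) (hv : MemLp v 2 μ) :
    2 * ∫ x, u x * v x ∂μ - ∫ x, v x ^ 2 ∂μ ≤ ∫ x, u x ^ 2 ∂μ := by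
  have huv : Integrable (fun x => u x * v x) μ := hu.integrable_mul hv
  rw [sub_le_iff_le_add, ← integral_const_mul, ← integral_add hu.integrable_sq hv.integrable_sq]
  refine integral_mono (huv.const_mul 2) (hu.integrable_sq.add hv.integrable_sq) fun x => ?_
  simpa only [mul_assoc] using two_mul_le_add_sq (u x) (v x)

lemma eventually_ae_norm_sub_le_of_tendstoUniformlyOn {E : Type*} [SeminormedAddCommGroup E]
    {l : Filter ι} {F : ι → Ω → E} {g : Ω → E} {s : Set Ω} (hs : MeasurableSet s)
    (hF : TendstoUniformlyOn F g l s) :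
    ∀ ε > 0, ∀ᶠ i in l, ∀ᵐ x ∂μ.restrict s, ‖F i x - g x‖ ≤ ε := fun ε hε => by
  filter_upwards [Metric.tendstoUniformlyOn_iff.1 hF ε hε] with i hi
  refine ae_restrict_of_forall_mem hs fun x hx => ?_
  rw [← dist_eq_norm, dist_comm]
  exact (hi x hx).le

variable [IsFiniteMeasure μ]

lemma TendstoWeakly.tendsto_setIntegral {l : Filter ι} (hw : TendstoWeakly μ l f φ) {s : Set Ω}
    (hs : MeasurableSet s) : Tendsto (fun i => ∫ x in s, f i x ∂μ) l (𝓝 (∫ x in s, φ x ∂μ)) := by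
  simpa only [mul_one] using hw.restrict hs _ (memLp_const (1 : ℝ))

lemma TendstoWeakly.ae_mem_Icc {l : Filter ι} [l.NeBot] (hw : TendstoWeakly μ l f φ)
    (hφ : Integrable φ μ) (hf : ∀ i, Integrable (f i) μ) {a b : ℝ}
    (hb : ∀ i, ∀ᵐ x ∂μ, f i x ∈ Icc a b) : ∀ᵐ x ∂μ, φ x ∈ Icc a b := by
  have hlower : (fun _ => a) ≤ᵐ[μ] φ :=
    ae_le_of_forall_setIntegral_le (integrable_const a) hφ fun s hs _ =>
      ge_of_tendsto' (hw.tendsto_setIntegral hs) fun i =>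
        setIntegral_mono_ae (integrable_const a).integrableOn (hf i).integrableOn
          ((hb i).mono fun _ hx => hx.1)
  have hupper : φ ≤ᵐ[μ] fun _ => b :=
    ae_le_of_forall_setIntegral_le hφ (integrable_const b) fun s hs _ =>
      le_of_tendsto' (hw.tendsto_setIntegral hs) fun i =>
        setIntegral_mono_ae (hf i).integrableOn (integrable_const b).integrableOn
          ((hb i).mono fun _ hx => hx.2)
  filter_upwards [hlower, hupper] with x hax hxb using ⟨hax, hxb⟩

lemma exists_tendstoWeakly_of_mem_Icc (l : Ultrafilter ι) {a b : ℝ} (hab : a ≤ b)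
    (hf : ∀ i, AEStronglyMeasurable (f i) μ) (hb : ∀ i, ∀ᵐ x ∂μ, f i x ∈ Icc a b) :
    ∃ φ, Measurable φ ∧ (∀ x, φ x ∈ Icc a b) ∧ TendstoWeakly μ l f φ := by
  have hbound (i : ι) : ∀ᵐ x ∂μ, ‖f i x‖ ≤ max |a| |b| := by
    filter_upwards [hb i] with x hx using abs_le_max_abs_abs hx.1 hx.2
  have hmem (i : ι) : MemLp (f i) 2 μ := MemLp.of_bound (hf i) _ (hbound i)
  obtain ⟨φ, hφ, hw⟩ := exists_tendstoWeakly_of_eLpNorm_le l hmem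
    (r := ((μ univ) ^ (2 : ℝ≥0∞).toReal⁻¹ * ENNReal.ofReal (max |a| |b|)).toNNReal) fun i => by
    rw [ENNReal.coe_toNNReal (by finiteness)]
    exact eLpNorm_le_of_ae_bound (hbound i)
  have hφ_mem := hw.ae_mem_Icc (hφ.integrable one_le_two)
    (fun i => (hmem i).integrable one_le_two) hb
  refine ⟨fun x => projIcc a b hab (hφ.1.mk φ x), ?_, fun x => Subtype.coe_prop _,
    hw.congr_ae ?_⟩
  · exact (continuous_subtype_val.comp continuous_projIcc).measurable.comp
      hφ.1.stronglyMeasurable_mk.measurable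
  · filter_upwards [hφ_mem, hφ.1.ae_eq_mk] with x hx hmk
    rw [← hmk, projIcc_of_mem hab hx]

lemma TendstoWeakly.tendsto_integral_mul {l : Filter ι} (hw : TendstoWeakly μ l f φ)
    (hf : ∀ i, AEStronglyMeasurable (f i) μ) {C : ℝ} (hC : ∀ i, ∀ᵐ x ∂μ, ‖f i x‖ ≤ C)
    {h : ι → Ω → ℝ} {k : Ω → ℝ} (hh : ∀ i, Integrable (h i) μ) (hk : MemLp k 2 μ)
    (hhk : ∀ ε > 0, ∀ᶠ i in l, ∀ᵐ x ∂μ, ‖h i x - k x‖ ≤ ε) :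
    Tendsto (fun i => ∫ x, f i x * h i x ∂μ) l (𝓝 (∫ x, φ x * k x ∂μ)) := by
  have hk1 := hk.integrable one_le_two
  have hsplit (i : ι) :
      ∫ x, f i x * h i x ∂μ = ∫ x, f i x * k x ∂μ + ∫ x, f i x * (h i x - k x) ∂μ := by
    have hdiff : Integrable (fun x => f i x * (h i x - k x)) μ :=
      ((hh i).sub hk1).bdd_mul (hf i) (hC i)
    rw [← integral_add (hk1.bdd_mul (hf i) (hC i)) hdiff]
    exact integral_congr_ae (ae_of_all _ fun x => by ring)
  have herror : Tendsto (fun i => ∫ x, f i x * (h i x - k x) ∂μ) l (𝓝 0) := by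
    refine Metric.tendsto_nhds.2 fun ε hε => ?_
    set D := |C| * μ.real univ + 1
    have hDpos : 0 < D := by positivity
    filter_upwards [hhk (ε / D) (by positivity)] with i hi
    rw [dist_zero_right]
    calc ‖∫ x, f i x * (h i x - k x) ∂μ‖ ≤ |C| * (ε / D) * μ.real univ := by
          refine norm_integral_le_of_norm_le_const ?_
          filter_upwards [hC i, hi] with x hfx hhx
          rw [norm_mul]
          exact mul_le_mul (hfx.trans (le_abs_self C)) hhx (norm_nonneg _) (abs_nonneg C)
      _ = ε * (|C| * μ.real univ / D) := by ring
      _ < ε := mul_lt_of_lt_one_right hε ((div_lt_one hDpos).2 (lt_add_one _))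
  simpa only [hsplit, add_zero] using (hw k hk).add herror

end WeakConvergence

lemma exists_tendstoUniformlyOn_of_lipschitzOnWith {ι X Y : Type*} [PseudoMetricSpace X]
    [PseudoMetricSpace Y] (l : Ultrafilter ι) {F : ι → X → Y} {s : Set X} {K : Set Y} {L : ℝ≥0}
    (hs : IsCompact s) (hK : IsCompact K) (hL : ∀ i, LipschitzOnWith L (F i) s)
    (hFK : ∀ i, MapsTo (F i) s K) :
    ∃ f, ContinuousOn f s ∧ MapsTo f s K ∧ TendstoUniformlyOn F f l s := by
  have hlim (t : X) : ∃ y, t ∈ s → y ∈ K ∧ Tendsto (fun i => F i t) l (𝓝 y) := by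
    by_cases ht : t ∈ s
    · obtain ⟨y, hy, hle⟩ := hK.ultrafilter_le_nhds (l.map fun i => F i t)
        (le_principal_iff.2 (mem_map.2 (univ_mem' fun i => hFK i ht)))
      exact ⟨y, fun _ => ⟨hy, hle⟩⟩
    · obtain ⟨i⟩ := l.neBot.nonempty
      exact ⟨F i t, fun h => (ht h).elim⟩
  choose f hf using hlim
  have hequi : EquicontinuousOn F s :=
    (LipschitzOnWith.uniformEquicontinuousOn F L hL).equicontinuousOn
  refine ⟨f, Tendsto.continuousOn_of_equicontinuousOn (fun t ht => (hf t ht).2) hequi,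
    fun t ht => (hf t ht).1, ?_⟩
  have : CompactSpace s := isCompact_iff_compactSpace.1 hs
  rw [tendstoUniformlyOn_iff_tendstoUniformly_comp_coe]
  refine UniformFun.tendsto_iff_tendstoUniformly.1
    (((equicontinuous_restrict_iff F).2 hequi).tendsto_uniformFun_iff_pi l (f ∘ (↑)) |>.2 ?_)
  exact tendsto_pi_nhds.2 fun t => (hf t t.2).2

section Trajectories

variable {κ E n : Type*} [NormedAddCommGroup E] [NormedSpace ℝ E] {T : ℝ} {M : κ → ℝ}
  {c : κ → ℝ → ℝ}

/-- The family of rates `c k` consists of measurable functions on `[0, T]` with `c k` taking its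
values in `[0, M k]` there; controls and continuous coefficients are both covered. -/
def IsAdmissible (T : ℝ) (M : κ → ℝ) (c : κ → ℝ → ℝ) : Prop :=
  ∀ k, AEStronglyMeasurable (c k) (volume.restrict (Icc 0 T)) ∧ ∀ t ∈ Icc 0 T, c k t ∈ Icc 0 (M k)

lemma IsAdmissible.bound_nonneg (hc : IsAdmissible T M c) (hT : 0 ≤ T) (k : κ) : 0 ≤ M k :=
  have h0 := (hc k).2 0 (left_mem_Icc.2 hT)
  h0.1.trans h0.2

lemma IsAdmissible.norm_le (hc : IsAdmissible T M c) {t : ℝ} (ht : t ∈ Icc 0 T) (k : κ) :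
    ‖c k t‖ ≤ M k := by
  rw [Real.norm_of_nonneg ((hc k).2 t ht).1]
  exact ((hc k).2 t ht).2

lemma IsAdmissible.mono (hc : IsAdmissible T M c) {S : ℝ} (hST : S ≤ T) : IsAdmissible S M c :=
  fun k => ⟨(hc k).1.mono_set (Icc_subset_Icc_right hST), fun t ht =>
    (hc k).2 t (Icc_subset_Icc_right hST ht)⟩

lemma IsAdmissible.integrableOn_smul (hc : IsAdmissible T M c) {f : ℝ → E}
    (hf : ContinuousOn f (Icc 0 T)) (k : κ) : IntegrableOn (fun s => c k s • f s) (Icc 0 T) :=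
  hf.integrableOn_Icc.bdd_smul (M k) (hc k).1
    (ae_restrict_of_forall_mem measurableSet_Icc fun _ ht => hc.norm_le ht k)

variable [Fintype κ]

/-- The time-dependent vector field `∑ k, c k • Φ k`, in which the elementary transition `Φ k`
happens at rate `c k`. -/
def rateField (Φ : κ → E → E) (c : κ → ℝ → ℝ) (s : ℝ) (y : E) : E := ∑ k, c k s • Φ k y

/-- Carathéodory solutions on `[0, T]` of `x' = ∑ k, c k • Φ k x`, encoded by the integral
equation. -/
def IsTrajectory (Φ : κ → E → E) (T : ℝ) (c : κ → ℝ → ℝ) (x : ℝ → E) : Prop :=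
  ContinuousOn x (Icc 0 T) ∧
    ∀ t ∈ Icc 0 T, x t = x 0 + ∫ s in (0 : ℝ)..t, rateField Φ c s (x s)

section Normed

variable {Φ : κ → E → E} {x : ℝ → E}

lemma IsAdmissible.norm_rateField_le (hc : IsAdmissible T M c) {B : κ → ℝ} {t : ℝ}
    (ht : t ∈ Icc 0 T) {y : E} (hB : ∀ k, ‖Φ k y‖ ≤ B k) :
    ‖rateField Φ c t y‖ ≤ ∑ k, M k * B k := by
  refine norm_sum_le_of_le _ fun k _ => ?_
  rw [norm_smul]
  exact mul_le_mul (hc.norm_le ht k) (hB k) (norm_nonneg _)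
    (hc.bound_nonneg (ht.1.trans ht.2) k)

lemma IsAdmissible.integrableOn_rateField (hc : IsAdmissible T M c) (hΦ : ∀ k, Continuous (Φ k))
    (hx : ContinuousOn x (Icc 0 T)) : IntegrableOn (fun s => rateField Φ c s (x s)) (Icc 0 T) :=
  integrable_finsetSum _ fun k _ => hc.integrableOn_smul ((hΦ k).comp_continuousOn hx) k

lemma IsTrajectory.lipschitzOnWith (hx : IsTrajectory Φ T c x) (hc : IsAdmissible T M c)
    (hΦ : ∀ k, Continuous (Φ k)) {B : κ → ℝ} (hB : ∀ k, ∀ t ∈ Icc 0 T, ‖Φ k (x t)‖ ≤ B k) :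
    LipschitzOnWith (∑ k, M k * B k).toNNReal x (Icc 0 T) := by
  refine LipschitzOnWith.of_dist_le_mul fun t ht s hs => ?_
  have hinterval {r : ℝ} (hr : r ∈ Icc 0 T) :
      IntervalIntegrable (fun s => rateField Φ c s (x s)) volume 0 r :=
    ((hc.integrableOn_rateField hΦ hx.1).mono_set
      (uIcc_subset_Icc (left_mem_Icc.2 (hr.1.trans hr.2)) hr)).intervalIntegrable
  rw [dist_eq_norm, Real.dist_eq, hx.2 t ht, hx.2 s hs, add_sub_add_left_eq_sub,
    intervalIntegral.integral_interval_sub_left (hinterval ht) (hinterval hs)]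
  refine intervalIntegral.norm_integral_le_of_norm_le_const fun r hr => ?_
  have hr' : r ∈ Icc 0 T := uIcc_subset_Icc hs ht (uIoc_subset_uIcc hr)
  exact (hc.norm_rateField_le hr' fun k => hB k r hr').trans (Real.le_coe_toNNReal _)

lemma exists_lipschitzOnWith_of_mapsTo_compact (hΦ : ∀ k, Continuous (Φ k)) {K : Set E}
    (hK : IsCompact K) : ∃ L : ℝ≥0, ∀ c x, IsAdmissible T M c → IsTrajectory Φ T c x →
      MapsTo x (Icc 0 T) K → LipschitzOnWith L x (Icc 0 T) := by
  choose B hB using fun k => hK.exists_bound_of_continuousOn (hΦ k).continuousOn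
  exact ⟨_, fun c x hc hx hxK =>
    hx.lipschitzOnWith hc hΦ fun k t ht => hB k _ (hxK ht)⟩

lemma exists_isTrajectory_of_lipschitzWith [CompleteSpace E] (hT : 0 ≤ T)
    (hc : IsAdmissible T M c) (hcc : ∀ k, ContinuousOn (c k) (Icc 0 T)) {L : κ → ℝ≥0}
    (hL : ∀ k, LipschitzWith (L k) (Φ k)) {B : κ → ℝ} (hB : ∀ k y, ‖Φ k y‖ ≤ B k) (x₀ : E) :
    ∃ x, x 0 = x₀ ∧ IsTrajectory Φ T c x := by
  have hlip : ∀ t ∈ Icc 0 T, LipschitzWith (∑ k, M k * L k).toNNReal (rateField Φ c t) := by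
    refine fun t ht => LipschitzWith.of_dist_le_mul fun y z => ?_
    calc dist (rateField Φ c t y) (rateField Φ c t z)
        = ‖∑ k, c k t • (Φ k y - Φ k z)‖ := by
          simp only [dist_eq_norm, rateField, smul_sub, Finset.sum_sub_distrib]
      _ ≤ ∑ k, M k * (L k * dist y z) := by
          refine norm_sum_le_of_le _ fun k _ => ?_
          rw [norm_smul, ← dist_eq_norm]
          exact mul_le_mul (hc.norm_le ht k) ((hL k).dist_le_mul y z) dist_nonneg
            (hc.bound_nonneg hT k)
      _ = (∑ k, M k * L k) * dist y z := by simp only [Finset.sum_mul, mul_assoc]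
      _ ≤ _ := by gcongr; exact Real.le_coe_toNNReal _
  have hcont (y : E) : ContinuousOn (fun t => rateField Φ c t y) (Icc 0 T) :=
    continuousOn_finsetSum _ fun k _ => (hcc k).smul continuousOn_const
  have hpl : IsPicardLindelof (rateField Φ c) (⟨0, left_mem_Icc.2 hT⟩ : Icc 0 T) x₀
      ((∑ k, M k * B k).toNNReal * T.toNNReal) 0 (∑ k, M k * B k).toNNReal
      (∑ k, M k * L k).toNNReal :=
    { lipschitzOnWith := fun t ht => (hlip t ht).lipschitzOnWith
      continuousOn := fun y _ => hcont y
      norm_le := fun t ht y _ =>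
        (hc.norm_rateField_le ht fun k => hB k y).trans (Real.le_coe_toNNReal _)
      mul_max_le := by simp [hT] }
  obtain ⟨x, hx0, hx⟩ := hpl.exists_eq_forall_mem_Icc_hasDerivWithinAt₀
  have hxc : ContinuousOn x (Icc 0 T) := fun t ht => (hx t ht).continuousWithinAt
  refine ⟨x, hx0, hxc, fun t ht => ?_⟩
  have hsub : Icc 0 t ⊆ Icc 0 T := Icc_subset_Icc_right ht.2
  have hint : IntervalIntegrable (fun s => rateField Φ c s (x s)) volume 0 t :=
    ((hc.integrableOn_rateField (fun k => (hL k).continuous) hxc).mono_set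
      (by rwa [uIcc_of_le ht.1])).intervalIntegrable
  rw [intervalIntegral.integral_eq_sub_of_hasDeriv_right_of_le ht.1 (hxc.mono hsub)
    (fun s hs => (hx s (hsub (Ioo_subset_Icc_self hs))).mono_of_mem_nhdsWithin ?_) hint,
    add_sub_cancel]
  exact mem_of_superset (Ioc_mem_nhdsGT (hs.2.trans_le ht.2))
    fun r hr => ⟨hs.1.le.trans hr.1.le, hr.2⟩

end Normed

section Positivity

variable {Φ : κ → (n → ℝ) → n → ℝ} {x : ℝ → n → ℝ}

lemma continuous_posPart_pi : Continuous fun y : n → ℝ => y⁺ :=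
  continuous_pi fun i => (continuous_apply i).max continuous_const

/-- On the face `y i = 0` of the nonnegative orthant the field does not point outwards. -/
def QuasiPositive (F : (n → ℝ) → n → ℝ) : Prop := ∀ y, 0 ≤ y → ∀ i, y i = 0 → 0 ≤ F y i

lemma QuasiPositive.exists_neg_le_mul_norm_negPart [Fintype n] {F : (n → ℝ) → n → ℝ}
    (hF : QuasiPositive F) (hlip : LocallyLipschitz F) {K : Set (n → ℝ)} (hK : IsCompact K) :
    ∃ L : ℝ≥0, ∀ y ∈ K, ∀ i, y i < 0 → -F y i ≤ L * ‖y⁻‖ := by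
  obtain ⟨L, hL⟩ := hlip.locallyLipschitzOn.exists_lipschitzOnWith_of_compact
    (hK.union (hK.image continuous_posPart_pi))
  refine ⟨L, fun y hy i hi => ?_⟩
  have hface : 0 ≤ F y⁺ i :=
    hF _ (posPart_nonneg y) i (by rw [Pi.posPart_apply, posPart_eq_zero.2 hi.le])
  calc -F y i ≤ (F y⁺ - F y) i := by rw [Pi.sub_apply]; linarith
    _ ≤ ‖F y⁺ - F y‖ := (le_abs_self _).trans (norm_le_pi_norm (F y⁺ - F y) i)
    _ ≤ L * ‖y⁺ - y‖ := by
      simpa only [dist_eq_norm] using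
        hL.dist_le_mul _ (Or.inr (mem_image_of_mem _ hy)) _ (Or.inl hy)
    _ = L * ‖y⁻‖ := by rw [sub_eq_iff_eq_add.2 (sub_eq_iff_eq_add'.1 (posPart_sub_negPart y))]

/-- The coordinatewise retraction onto the box `[0, N]ⁿ`. -/
def boxClamp (N : ℝ) (y : n → ℝ) : n → ℝ := fun i => max 0 (min N (y i))

lemma boxClamp_mem {N : ℝ} (hN : 0 ≤ N) (y : n → ℝ) : boxClamp N y ∈ Icc 0 fun _ => N :=
  ⟨fun _ => le_max_left _ _, fun _ => max_le hN (min_le_left _ _)⟩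

lemma boxClamp_of_mem {N : ℝ} {y : n → ℝ} (hy : y ∈ Icc 0 fun _ => N) : boxClamp N y = y :=
  funext fun i => by rw [boxClamp, min_eq_right (hy.2 i)]; exact max_eq_right (hy.1 i)

lemma QuasiPositive.comp_boxClamp {F : (n → ℝ) → n → ℝ} (hF : QuasiPositive F) {N : ℝ}
    (hN : 0 ≤ N) : QuasiPositive (F ∘ boxClamp N) := fun y _ i hyi =>
  hF _ (boxClamp_mem hN y).1 i (by rw [boxClamp, hyi, min_eq_right hN, max_self])

variable [Fintype n]

lemma lipschitzWith_boxClamp (N : ℝ) : LipschitzWith 1 (boxClamp N : (n → ℝ) → n → ℝ) := by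
  refine LipschitzWith.mk_one fun y z => (dist_pi_le_iff dist_nonneg).2 fun i => ?_
  have hclamp : LipschitzWith 1 fun r : ℝ => max 0 (min N r) :=
    (LipschitzWith.id.const_min N).const_max 0
  calc dist (boxClamp N y i) (boxClamp N z i) ≤ dist (y i) (z i) := by
        simpa only [NNReal.coe_one, one_mul, boxClamp] using hclamp.dist_le_mul (y i) (z i)
    _ ≤ dist y z := dist_le_pi_dist y z i

lemma IsAdmissible.isTrajectory_iff (hc : IsAdmissible T M c) (hΦ : ∀ k, Continuous (Φ k))
    (hx : ContinuousOn x (Icc 0 T)) : IsTrajectory Φ T c x ↔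
      ∀ i, ∀ t ∈ Icc 0 T, x t i = x 0 i + ∫ s in (0 : ℝ)..t, rateField Φ c s (x s) i := by
  have happly {t : ℝ} (ht : t ∈ Icc 0 T) (i : n) :
      (∫ s in (0 : ℝ)..t, rateField Φ c s (x s)) i
        = ∫ s in (0 : ℝ)..t, rateField Φ c s (x s) i := by
    have hint : IntervalIntegrable (fun s => rateField Φ c s (x s)) volume 0 t :=
      ((hc.integrableOn_rateField hΦ hx).mono_set
        (uIcc_subset_Icc (left_mem_Icc.2 (ht.1.trans ht.2)) ht)).intervalIntegrable
    exact ((ContinuousLinearMap.proj i : (n → ℝ) →L[ℝ] ℝ).intervalIntegral_comp_comm hint).symm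
  refine ⟨fun h i t ht => ?_, fun h => ⟨hx, fun t ht => funext fun i => ?_⟩⟩
  · rw [← happly ht, ← Pi.add_apply, ← h.2 t ht]
  · rw [Pi.add_apply, happly ht, h i t ht]

lemma IsTrajectory.nonneg (hx : IsTrajectory Φ T c x) (hc : IsAdmissible T M c)
    (hlip : ∀ k, LocallyLipschitz (Φ k)) (hpos : ∀ k, QuasiPositive (Φ k)) (hx0 : 0 ≤ x 0) :
    ∀ t ∈ Icc 0 T, 0 ≤ x t := by
  have hΦ k := (hlip k).continuous
  choose L hL using fun k =>
    (hpos k).exists_neg_le_mul_norm_negPart (hlip k) (isCompact_Icc.image_of_continuousOn hx.1)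
  set C : ℝ := ∑ k, M k * L k with hC
  have hnegPart : ContinuousOn (fun s => ‖(x s)⁻‖) (Icc 0 T) :=
    (continuous_posPart_pi.comp_continuousOn hx.1.neg).norm
  have hinward : ∀ s ∈ Icc 0 T, ∀ i, x s i < 0 → -rateField Φ c s (x s) i ≤ C * ‖(x s)⁻‖ := by
    intro s hs i hi
    rw [hC, Finset.sum_mul, rateField, Finset.sum_apply, ← Finset.sum_neg_distrib]
    refine Finset.sum_le_sum fun k _ => ?_
    have hck := (hc k).2 s hs
    calc -(c k s • Φ k (x s)) i = c k s * -Φ k (x s) i := by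
          rw [Pi.smul_apply, smul_eq_mul, mul_neg]
      _ ≤ c k s * (L k * ‖(x s)⁻‖) :=
          mul_le_mul_of_nonneg_left (hL k _ (mem_image_of_mem x hs) i hi) hck.1
      _ ≤ M k * (L k * ‖(x s)⁻‖) := mul_le_mul_of_nonneg_right hck.2 (by positivity)
      _ = M k * L k * ‖(x s)⁻‖ := (mul_assoc _ _ _).symm
  have hC0 : ∀ t ∈ Icc 0 T, 0 ≤ C := fun t ht =>
    Finset.sum_nonneg fun k _ => mul_nonneg (hc.bound_nonneg (ht.1.trans ht.2) k) (L k).2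
  have hgronwall : ∀ t ∈ Icc 0 T, ‖(x t)⁻‖ ≤ C * ∫ s in (0 : ℝ)..t, ‖(x s)⁻‖ := by
    intro t ht
    have hbound (i : n) := negPart_le_integral (continuousOn_pi.1 hx.1 i)
      (Integrable.eval (hc.integrableOn_rateField hΦ hx.1) i)
      (hnegPart.const_mul C).integrableOn_Icc
      (fun s hs => mul_nonneg (hC0 s hs) (norm_nonneg _))
      ((hc.isTrajectory_iff hΦ hx.1).1 hx i) (hx0 i) (fun s hs => hinward s hs i) t ht
    rw [← intervalIntegral.integral_const_mul]
    refine (pi_norm_le_iff_of_nonneg ?_).2 fun i => ?_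
    · exact intervalIntegral.integral_nonneg ht.1 fun _ _ =>
        mul_nonneg (hC0 t ht) (norm_nonneg _)
    · rw [Pi.negPart_apply, Real.norm_of_nonneg (negPart_nonneg _)]
      exact hbound i
  intro t ht
  exact negPart_eq_zero.1 (norm_eq_zero.1
    (eq_zero_of_le_mul_integral hnegPart (fun _ _ => norm_nonneg _) hgronwall t ht))

lemma sum_rateField_apply {y : n → ℝ} (hcons : ∀ k, ∑ i, Φ k y i = 0) (s : ℝ) :
    ∑ i, rateField Φ c s y i = 0 := by
  simp only [rateField, Finset.sum_apply, Pi.smul_apply, smul_eq_mul]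
  rw [Finset.sum_comm]
  simp only [← Finset.mul_sum, hcons, mul_zero, Finset.sum_const_zero]

lemma IsTrajectory.sum_apply_eq (hx : IsTrajectory Φ T c x) (hc : IsAdmissible T M c)
    (hΦ : ∀ k, Continuous (Φ k)) (hcons : ∀ k y, ∑ i, Φ k y i = 0) {t : ℝ} (ht : t ∈ Icc 0 T) :
    ∑ i, x t i = ∑ i, x 0 i := by
  have hint (i : n) : IntervalIntegrable (fun s => rateField Φ c s (x s) i) volume 0 t :=
    (IntegrableOn.mono_set (Integrable.eval (hc.integrableOn_rateField hΦ hx.1) i)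
      (uIcc_subset_Icc (left_mem_Icc.2 (ht.1.trans ht.2)) ht)).intervalIntegrable
  rw [Finset.sum_congr rfl fun i _ => (hc.isTrajectory_iff hΦ hx.1).1 hx i t ht,
    Finset.sum_add_distrib, ← intervalIntegral.integral_finsetSum fun i _ => hint i]
  simp only [sum_rateField_apply fun k => hcons k _, intervalIntegral.integral_zero, add_zero]

lemma mem_Icc_const_of_nonneg_of_sum_eq {y : n → ℝ} {N : ℝ} (hy : 0 ≤ y) (hsum : ∑ i, y i = N) :
    y ∈ Icc 0 fun _ => N :=
  ⟨hy, fun i => hsum ▸ Finset.single_le_sum (fun j _ => hy j) (Finset.mem_univ i)⟩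

lemma IsTrajectory.mapsTo_Icc (hx : IsTrajectory Φ T c x) (hc : IsAdmissible T M c)
    (hlip : ∀ k, LocallyLipschitz (Φ k)) (hpos : ∀ k, QuasiPositive (Φ k))
    (hcons : ∀ k y, ∑ i, Φ k y i = 0) (hx0 : 0 ≤ x 0) :
    MapsTo x (Icc 0 T) (Icc 0 fun _ => ∑ i, x 0 i) := fun t ht =>
  mem_Icc_const_of_nonneg_of_sum_eq (hx.nonneg hc hlip hpos hx0 t ht)
    (hx.sum_apply_eq hc (fun k => (hlip k).continuous) hcons ht)

lemma exists_isTrajectory (hT : 0 ≤ T) (hc : IsAdmissible T M c)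
    (hcc : ∀ k, ContinuousOn (c k) (Icc 0 T)) (hlip : ∀ k, LocallyLipschitz (Φ k))
    (hpos : ∀ k, QuasiPositive (Φ k)) (hcons : ∀ k y, ∑ i, Φ k y i = 0) {x₀ : n → ℝ}
    (hx₀ : 0 ≤ x₀) : ∃ x, x 0 = x₀ ∧ IsTrajectory Φ T c x := by
  set N : ℝ := ∑ i, x₀ i with hN
  have hN0 : 0 ≤ N := Finset.sum_nonneg fun i _ => hx₀ i
  have hbox : IsCompact (Icc (0 : n → ℝ) fun _ => N) := isCompact_Icc
  choose L hL using fun k => (hlip k).locallyLipschitzOn.exists_lipschitzOnWith_of_compact hbox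
  choose B hB using fun k => hbox.exists_bound_of_continuousOn (hlip k).continuous.continuousOn
  have hclamp_lip (k : κ) : LipschitzWith (L k * 1) (Φ k ∘ boxClamp N) :=
    lipschitzOnWith_univ.1
      ((hL k).comp (lipschitzWith_boxClamp N).lipschitzOnWith fun y _ => boxClamp_mem hN0 y)
  obtain ⟨x, hx0, hx⟩ := exists_isTrajectory_of_lipschitzWith hT hc hcc hclamp_lip
    (fun k y => hB k _ (boxClamp_mem hN0 y)) x₀
  have hxbox : MapsTo x (Icc 0 T) (Icc 0 fun _ => N) := by
    rw [hN, ← hx0]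
    exact hx.mapsTo_Icc hc (fun k => (hclamp_lip k).locallyLipschitz)
      (fun k => (hpos k).comp_boxClamp hN0) (fun k y => hcons k _) (hx0 ▸ hx₀)
  refine ⟨x, hx0, hx.1, fun t ht => (hx.2 t ht).trans ?_⟩
  congr 1
  refine intervalIntegral.integral_congr fun s hs => ?_
  have hs' : s ∈ Icc 0 T := uIcc_subset_Icc (left_mem_Icc.2 hT) ht hs
  simp only [rateField, Function.comp_apply, boxClamp_of_mem (hxbox hs')]

end Positivity

section Limits

variable {ι : Type*} [Fintype n] {Φ : κ → (n → ℝ) → n → ℝ} {l : Filter ι}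
  {c : ι → κ → ℝ → ℝ} {d : κ → ℝ → ℝ} {x : ι → ℝ → n → ℝ} {y : ℝ → n → ℝ}

lemma IsAdmissible.integral_rateField_apply (hd : IsAdmissible T M d)
    (hΦ : ∀ k, Continuous (Φ k)) (hy : ContinuousOn y (Icc 0 T)) (j : n) {t : ℝ}
    (ht : t ∈ Icc 0 T) : ∫ s in (0 : ℝ)..t, rateField Φ d s (y s) j
      = ∑ k, ∫ s in Icc 0 t, d k s * Φ k (y s) j := by
  have hint (k : κ) : IntegrableOn (fun s => d k s * Φ k (y s) j) (Icc 0 t) :=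
    (hd.integrableOn_smul (continuousOn_pi.1 ((hΦ k).comp_continuousOn hy) j) k).mono_set
      (Icc_subset_Icc_right ht.2)
  rw [intervalIntegral.integral_of_le ht.1, ← integral_Icc_eq_integral_Ioc,
    ← integral_finsetSum _ fun k _ => hint k]
  simp only [rateField, Finset.sum_apply, Pi.smul_apply, smul_eq_mul]

lemma tendsto_integral_rateField (hc : ∀ i, IsAdmissible T M (c i))
    (hcd : ∀ k, TendstoWeakly (volume.restrict (Icc 0 T)) l (fun i => c i k) (d k))
    (hd : IsAdmissible T M d) (hΦ : ∀ k, Continuous (Φ k)) {K : Set (n → ℝ)} (hK : IsCompact K)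
    (hx : ∀ i, ContinuousOn (x i) (Icc 0 T)) (hxK : ∀ i, MapsTo (x i) (Icc 0 T) K)
    (hy : ContinuousOn y (Icc 0 T)) (hyK : MapsTo y (Icc 0 T) K)
    (hxy : TendstoUniformlyOn x y l (Icc 0 T)) (j : n) {t : ℝ} (ht : t ∈ Icc 0 T) :
    Tendsto (fun i => ∫ s in (0 : ℝ)..t, rateField Φ (c i) s (x i s) j) l
      (𝓝 (∫ s in (0 : ℝ)..t, rateField Φ d s (y s) j)) := by
  have hsub : Icc 0 t ⊆ Icc 0 T := Icc_subset_Icc_right ht.2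
  have hcomp {z : ℝ → n → ℝ} (hz : ContinuousOn z (Icc 0 T)) (k : κ) :
      ContinuousOn (fun s => Φ k (z s) j) (Icc 0 T) :=
    continuousOn_pi.1 ((hΦ k).comp_continuousOn hz) j
  simp only [(hc _).integral_rateField_apply hΦ (hx _) j ht,
    hd.integral_rateField_apply hΦ hy j ht]
  refine tendsto_finsetSum _ fun k _ => ?_
  have hweak : TendstoWeakly (volume.restrict (Icc 0 t)) l (fun i => c i k) (d k) := by
    have := (hcd k).restrict (measurableSet_Icc (a := 0) (b := t))
    rwa [Measure.restrict_restrict_of_subset hsub] at this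
  have hunif : TendstoUniformlyOn (fun i s => Φ k (x i s) j) (fun s => Φ k (y s) j) l
      (Icc 0 T) :=
    (hK.uniformContinuousOn_of_continuous
      ((continuous_apply j).comp (hΦ k)).continuousOn).comp_tendstoUniformlyOn_eventually
        (Eventually.of_forall fun i s hs => hxK i hs) (fun s hs => hyK hs) hxy
  exact hweak.tendsto_integral_mul (fun i => (hc i k).1.mono_measure
      (Measure.restrict_mono hsub le_rfl)) (C := M k)
    (fun i => ae_restrict_of_forall_mem measurableSet_Icc fun s hs => (hc i).norm_le (hsub hs) k)
    (fun i => ((hcomp (hx i) k).mono hsub).integrableOn_Icc)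
    (memLp_Icc_of_continuousOn ((hcomp hy k).mono hsub))
    (eventually_ae_norm_sub_le_of_tendstoUniformlyOn measurableSet_Icc (hunif.mono hsub))

lemma IsTrajectory.of_tendstoUniformlyOn [l.NeBot] (htraj : ∀ i, IsTrajectory Φ T (c i) (x i))
    (hc : ∀ i, IsAdmissible T M (c i))
    (hcd : ∀ k, TendstoWeakly (volume.restrict (Icc 0 T)) l (fun i => c i k) (d k))
    (hd : IsAdmissible T M d) (hΦ : ∀ k, Continuous (Φ k)) {K : Set (n → ℝ)} (hK : IsCompact K)
    (hxK : ∀ i, MapsTo (x i) (Icc 0 T) K) (hy : ContinuousOn y (Icc 0 T))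
    (hyK : MapsTo y (Icc 0 T) K) (hxy : TendstoUniformlyOn x y l (Icc 0 T)) :
    IsTrajectory Φ T d y := by
  refine (hd.isTrajectory_iff hΦ hy).2 fun j t ht => ?_
  have hpt {s : ℝ} (hs : s ∈ Icc 0 T) : Tendsto (fun i => x i s j) l (𝓝 (y s j)) :=
    tendsto_pi_nhds.1 (hxy.tendsto_at hs) j
  refine tendsto_nhds_unique (hpt ht) ?_
  simp only [((hc _).isTrajectory_iff hΦ (htraj _).1).1 (htraj _) j t ht]
  exact (hpt (left_mem_Icc.2 (ht.1.trans ht.2))).add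
    (tendsto_integral_rateField hc hcd hd hΦ hK (fun i => (htraj i).1) hxK hy hyK hxy j ht)

end Limits

lemma exists_isTrajectory_tendstoUniformlyOn {ι : Type*} [Fintype n] (l : Ultrafilter ι)
    {Φ : κ → (n → ℝ) → n → ℝ} {c : ι → κ → ℝ → ℝ} {d : κ → ℝ → ℝ} {x : ι → ℝ → n → ℝ}
    {x₀ : n → ℝ} (hT : 0 ≤ T) (htraj : ∀ i, IsTrajectory Φ T (c i) (x i))
    (hx0 : ∀ i, x i 0 = x₀) (hx₀ : 0 ≤ x₀) (hc : ∀ i, IsAdmissible T M (c i))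
    (hd : IsAdmissible T M d)
    (hcd : ∀ k, TendstoWeakly (volume.restrict (Icc 0 T)) l (fun i => c i k) (d k))
    (hlip : ∀ k, LocallyLipschitz (Φ k)) (hpos : ∀ k, QuasiPositive (Φ k))
    (hcons : ∀ k y, ∑ i, Φ k y i = 0) :
    ∃ y, y 0 = x₀ ∧ IsTrajectory Φ T d y ∧ TendstoUniformlyOn x y l (Icc 0 T) := by
  have hΦ k := (hlip k).continuous
  have hbox : IsCompact (Icc (0 : n → ℝ) fun _ => ∑ i, x₀ i) := isCompact_Icc
  have hmaps (i : ι) : MapsTo (x i) (Icc 0 T) (Icc 0 fun _ => ∑ i, x₀ i) :=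
    hx0 i ▸ (htraj i).mapsTo_Icc (hc i) hlip hpos hcons (hx0 i ▸ hx₀)
  obtain ⟨L, hL⟩ := exists_lipschitzOnWith_of_mapsTo_compact (T := T) (M := M) hΦ hbox
  obtain ⟨y, hy, hyK, hxy⟩ := exists_tendstoUniformlyOn_of_lipschitzOnWith l isCompact_Icc hbox
    (fun i => hL _ _ (hc i) (htraj i) (hmaps i)) hmaps
  refine ⟨y, tendsto_nhds_unique (hxy.tendsto_at (left_mem_Icc.2 hT)) ?_,
    .of_tendstoUniformlyOn htraj hc hcd hd hΦ hbox hmaps hy hyK hxy, hxy⟩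
  simpa only [hx0] using tendsto_const_nhds

end Trajectories

section Minimization

lemma exists_forall_le_of_ultrafilter {X : Type*} [Nonempty X] {f : X → ℝ}
    (h : ∀ l : Ultrafilter X, ∃ x, ∀ m, (∀ᶠ y in l, f y ≤ m) → f x ≤ m) :
    ∃ x, ∀ y, f x ≤ f y := by
  have hdirected : Directed (· ≥ ·) fun y => 𝓟 {z | f z ≤ f y} := fun y z =>
    (le_total (f y) (f z)).elim
      (fun hyz => ⟨y, le_rfl, principal_mono.2 fun _ hw => le_trans hw hyz⟩)
      (fun hzy => ⟨z, principal_mono.2 fun _ hw => le_trans hw hzy, le_rfl⟩)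
  have : (⨅ y, 𝓟 {z | f z ≤ f y}).NeBot :=
    iInf_neBot_of_directed hdirected fun y => principal_neBot_iff.2 ⟨y, le_refl (f y)⟩
  obtain ⟨x, hx⟩ := h (Ultrafilter.of (⨅ y, 𝓟 {z | f z ≤ f y}))
  exact ⟨x, fun y => hx _ (Ultrafilter.of_le _ (mem_iInf_of_mem y (mem_principal_self _)))⟩

variable {T k1 k2 k3 : ℝ}

lemma cost_eq (hT : 0 ≤ T) {P u1 u2 : ℝ → ℝ} (hP : ContinuousOn P (Icc 0 T))
    (hu1 : MemLp u1 2 (volume.restrict (Icc 0 T)))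
    (hu2 : MemLp u2 2 (volume.restrict (Icc 0 T))) :
    cost T k1 k2 k3 P u1 u2 = k1 * (∫ t in Icc 0 T, P t)
      + k2 * (∫ t in Icc 0 T, u1 t ^ 2) + k3 * ∫ t in Icc 0 T, u2 t ^ 2 := by
  have hP1 : IntegrableOn (fun t => k1 * P t) (Icc 0 T) := hP.integrableOn_Icc.const_mul k1
  have hPu1 : IntegrableOn (fun t => k1 * P t + k2 * u1 t ^ 2) (Icc 0 T) :=
    hP1.add (hu1.integrable_sq.const_mul k2)
  rw [cost, intervalIntegral.integral_of_le hT, ← integral_Icc_eq_integral_Ioc,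
    integral_add hPu1 (hu2.integrable_sq.const_mul k3),
    integral_add hP1 (hu1.integrable_sq.const_mul k2), integral_const_mul,
    integral_const_mul, integral_const_mul]

lemma tendsto_integral_Icc_of_tendstoUniformlyOn {ι : Type*} {l : Filter ι} [l.NeBot] {a b : ℝ}
    {F : ι → ℝ → ℝ} {f : ℝ → ℝ} (hF : ∀ i, ContinuousOn (F i) (Icc a b))
    (hFf : TendstoUniformlyOn F f l (Icc a b)) :
    Tendsto (fun i => ∫ t in Icc a b, F i t) l (𝓝 (∫ t in Icc a b, f t)) := by
  have hf : ContinuousOn f (Icc a b) := hFf.continuousOn (Eventually.of_forall hF).frequently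
  have hlim := (TendstoWeakly.const (μ := volume.restrict (Icc a b)) (l := l)
    fun _ => (1 : ℝ)).tendsto_integral_mul (C := 1) (fun _ => aestronglyMeasurable_const)
    (fun _ => ae_of_all _ fun _ => norm_one.le) (fun i => (hF i).integrableOn_Icc)
    (memLp_Icc_of_continuousOn hf)
    (eventually_ae_norm_sub_le_of_tendstoUniformlyOn measurableSet_Icc hFf)
  simpa only [one_mul] using hlim

-- The squares are replaced by their tangents `2 u v - v ^ 2` at the weak limit `v`: affine
-- minorants which are exact at `u = v` and whose integrals converge.
lemma cost_le_of_eventually_le {ι : Type*} {l : Filter ι} [l.NeBot] {P u1 u2 : ι → ℝ → ℝ}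
    {Q v1 v2 : ℝ → ℝ} (hT : 0 ≤ T) (hk2 : 0 ≤ k2) (hk3 : 0 ≤ k3)
    (hP : ∀ i, ContinuousOn (P i) (Icc 0 T)) (hPQ : TendstoUniformlyOn P Q l (Icc 0 T))
    (hu1 : ∀ i, MemLp (u1 i) 2 (volume.restrict (Icc 0 T)))
    (hu2 : ∀ i, MemLp (u2 i) 2 (volume.restrict (Icc 0 T)))
    (hv1 : MemLp v1 2 (volume.restrict (Icc 0 T)))
    (hv2 : MemLp v2 2 (volume.restrict (Icc 0 T)))
    (huv1 : TendstoWeakly (volume.restrict (Icc 0 T)) l u1 v1)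
    (huv2 : TendstoWeakly (volume.restrict (Icc 0 T)) l u2 v2) {m : ℝ}
    (hm : ∀ᶠ i in l, cost T k1 k2 k3 (P i) (u1 i) (u2 i) ≤ m) :
    cost T k1 k2 k3 Q v1 v2 ≤ m := by
  have hQ : ContinuousOn Q (Icc 0 T) :=
    hPQ.continuousOn (Eventually.of_forall hP).frequently
  have hintP := tendsto_integral_Icc_of_tendstoUniformlyOn hP hPQ
  set tangent : ι → ℝ := fun i => k1 * (∫ t in Icc 0 T, P i t)
    + k2 * (2 * (∫ t in Icc 0 T, u1 i t * v1 t) - ∫ t in Icc 0 T, v1 t ^ 2)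
    + k3 * (2 * (∫ t in Icc 0 T, u2 i t * v2 t) - ∫ t in Icc 0 T, v2 t ^ 2) with htangent
  have hle (i : ι) : tangent i ≤ cost T k1 k2 k3 (P i) (u1 i) (u2 i) := by
    rw [cost_eq hT (hP i) (hu1 i) (hu2 i)]
    simp only [htangent]
    gcongr
    · exact two_mul_integral_mul_sub_le (hu1 i) hv1
    · exact two_mul_integral_mul_sub_le (hu2 i) hv2
  have hlim : Tendsto tangent l (𝓝 (cost T k1 k2 k3 Q v1 v2)) := by
    have hsq (v : ℝ → ℝ) : ∫ t in Icc 0 T, v t ^ 2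
        = 2 * (∫ t in Icc 0 T, v t * v t) - ∫ t in Icc 0 T, v t ^ 2 := by
      simp only [← sq]
      ring
    rw [cost_eq hT hQ hv1 hv2, hsq v1, hsq v2]
    exact ((hintP.const_mul k1).add ((((huv1 v1 hv1).const_mul 2).sub_const _).const_mul k2)).add
      ((((huv2 v2 hv2).const_mul 2).sub_const _).const_mul k3)
  exact le_of_tendsto hlim (hm.mono fun i hi => (hle i).trans hi)

end Minimization

section ControlledSystem

variable {T lam1 lam2 a1 a2 N G B u1max u2max R0 C0 P0 k1 k2 k3 : ℝ}
  {beta gam u1 u2 R C P : ℝ → ℝ}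

/-- The rates of the five transitions of the controlled system: the exchange between `R` and `C`,
which is autonomous, then those governed by `γ`, `β`, `u₁` and `u₂`. -/
def rates (beta gam u1 u2 : ℝ → ℝ) : Fin 5 → ℝ → ℝ := ![fun _ => 1, gam, beta, u1, u2]

/-- The state `(R, C, P)` as a curve in `ℝ³`. -/
def state (R C P : ℝ → ℝ) (s : ℝ) : Fin 3 → ℝ := ![R s, C s, P s]

/-- Transfer of the mass `q` out of `P`, of which the fraction `a` goes to `R` and the rest
to `C`. -/
def transfer (a q : ℝ) : Fin 3 → ℝ := ![a * q, (1 - a) * q, -q]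

/-- The elementary transitions of the controlled system, in the order of `rates`. The total
population is frozen at the value `N`, which makes them polynomial. -/
noncomputable def transition (lam1 lam2 a1 a2 N : ℝ) : Fin 5 → (Fin 3 → ℝ) → Fin 3 → ℝ :=
  ![fun y => ![lam1 * y 1 - lam2 * y 0, lam2 * y 0 - lam1 * y 1, 0],
    fun y => ![-y 0, -y 1, y 0 + y 1],
    fun y => transfer a2 (y 2 * y 0 / N),
    fun y => transfer a1 (y 2),
    fun y => transfer a2 (y 2 * y 0 / N)]

lemma contDiff_transition (k : Fin 5) : ContDiff ℝ 1 (transition lam1 lam2 a1 a2 N k) := by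
  refine contDiff_pi.2 fun i => ?_
  fin_cases k <;> fin_cases i <;>
    simp only [transition, transfer, Fin.zero_eta, Fin.mk_one, Fin.reduceFinMk,
      Matrix.cons_val] <;> fun_prop

lemma continuous_transition (k : Fin 5) : Continuous (transition lam1 lam2 a1 a2 N k) :=
  (contDiff_transition k).continuous

lemma locallyLipschitz_transition (k : Fin 5) :
    LocallyLipschitz (transition lam1 lam2 a1 a2 N k) :=
  (contDiff_transition k).locallyLipschitz

lemma sum_transition_apply (k : Fin 5) (y : Fin 3 → ℝ) :
    ∑ i, transition lam1 lam2 a1 a2 N k y i = 0 := by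
  fin_cases k <;> simp [transition, transfer, Fin.sum_univ_three] <;> ring

lemma quasiPositive_transfer {a : ℝ} (ha : a ∈ Icc 0 1) {q : (Fin 3 → ℝ) → ℝ}
    (hq : ∀ y, 0 ≤ y → 0 ≤ q y) (hq2 : ∀ y, y 2 = 0 → q y = 0) :
    QuasiPositive fun y => transfer a (q y) := by
  intro y hy i hyi
  fin_cases i
  · exact mul_nonneg ha.1 (hq y hy)
  · exact mul_nonneg (sub_nonneg.2 ha.2) (hq y hy)
  · simp [transfer, hq2 y hyi]

lemma quasiPositive_transition (hlam1 : 0 ≤ lam1) (hlam2 : 0 ≤ lam2) (ha1 : a1 ∈ Icc 0 1)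
    (ha2 : a2 ∈ Icc 0 1) (hN : 0 ≤ N) (k : Fin 5) :
    QuasiPositive (transition lam1 lam2 a1 a2 N k) := by
  have hinteraction : QuasiPositive fun y => transfer a2 (y 2 * y 0 / N) :=
    quasiPositive_transfer ha2 (fun y hy => div_nonneg (mul_nonneg (hy 2) (hy 0)) hN)
      fun y hy => by rw [hy, zero_mul, zero_div]
  fin_cases k
  · intro y hy i hyi
    have h0 := mul_nonneg hlam2 (hy 0)
    have h1 := mul_nonneg hlam1 (hy 1)
    fin_cases i <;> simp_all [transition]
  · intro y hy i hyi
    have h01 := add_nonneg (hy 0) (hy 1)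
    fin_cases i <;> simp_all [transition]
  · exact hinteraction
  · exact quasiPositive_transfer ha1 (fun y hy => hy 2) fun y hy => hy
  · exact hinteraction

lemma rateField_transition (s : ℝ) :
    rateField (transition lam1 lam2 a1 a2 (R s + C s + P s)) (rates beta gam u1 u2) s
        (state R C P s)
      = ![rhsR lam1 lam2 a1 a2 beta gam u1 u2 R C P s,
          rhsC lam1 lam2 a1 a2 beta gam u1 u2 R C P s,
          rhsP lam1 lam2 a1 a2 beta gam u1 u2 R C P s] := by
  ext i
  fin_cases i <;>
    simp [rateField, transition, transfer, rates, state, rhsR, rhsC, rhsP, Fin.sum_univ_five] <;>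
    ring

lemma continuousOn_state {s : Set ℝ} : ContinuousOn (state R C P) s ↔
    ContinuousOn R s ∧ ContinuousOn C s ∧ ContinuousOn P s := by
  simp [continuousOn_pi, state, Fin.forall_fin_succ]

lemma isAdmissible_rates (hgam_cont : ContinuousOn gam (Icc 0 T))
    (hgam : ∀ t ∈ Icc 0 T, gam t ∈ Icc 0 G) (hbeta_cont : ContinuousOn beta (Icc 0 T))
    (hbeta : ∀ t ∈ Icc 0 T, beta t ∈ Icc 0 B) (hu1m : Measurable u1) (hu2m : Measurable u2)
    (hu1 : ∀ t ∈ Icc 0 T, u1 t ∈ Icc 0 u1max) (hu2 : ∀ t ∈ Icc 0 T, u2 t ∈ Icc 0 u2max) :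
    IsAdmissible T ![1, G, B, u1max, u2max] (rates beta gam u1 u2) := by
  intro k
  fin_cases k
  · exact ⟨aestronglyMeasurable_const, fun _ _ => ⟨zero_le_one, le_rfl⟩⟩
  · exact ⟨hgam_cont.aestronglyMeasurable measurableSet_Icc, hgam⟩
  · exact ⟨hbeta_cont.aestronglyMeasurable measurableSet_Icc, hbeta⟩
  · exact ⟨hu1m.aestronglyMeasurable, hu1⟩
  · exact ⟨hu2m.aestronglyMeasurable, hu2⟩

variable {M : Fin 5 → ℝ}

lemma isSolution_iff_isTrajectory (hc : IsAdmissible T M (rates beta gam u1 u2))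
    (htotal : ∀ t ∈ Icc 0 T, R t + C t + P t = N) :
    IsSolution T lam1 lam2 a1 a2 beta gam u1 u2 R C P ↔
      IsTrajectory (transition lam1 lam2 a1 a2 N) T (rates beta gam u1 u2) (state R C P) := by
  have hintegral {t : ℝ} (ht : t ∈ Icc 0 T) (i : Fin 3) :
      ∫ s in (0 : ℝ)..t, rateField (transition lam1 lam2 a1 a2 N) (rates beta gam u1 u2) s
          (state R C P s) i
        = ∫ s in (0 : ℝ)..t, ![rhsR lam1 lam2 a1 a2 beta gam u1 u2 R C P s,
          rhsC lam1 lam2 a1 a2 beta gam u1 u2 R C P s,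
          rhsP lam1 lam2 a1 a2 beta gam u1 u2 R C P s] i :=
    intervalIntegral.integral_congr fun s hs => by
      have hs' := uIcc_subset_Icc (left_mem_Icc.2 (ht.1.trans ht.2)) ht hs
      simp only [← rateField_transition, htotal s hs']
  have hiff (hx : ContinuousOn (state R C P) (Icc 0 T)) :=
    hc.isTrajectory_iff (continuous_transition (lam1 := lam1) (lam2 := lam2) (a1 := a1)
      (a2 := a2) (N := N)) hx
  constructor
  · rintro ⟨hR, hC, hP, hRint, hCint, hPint⟩
    refine (hiff (continuousOn_state.2 ⟨hR, hC, hP⟩)).2 fun i t ht => ?_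
    rw [hintegral ht]
    fin_cases i
    exacts [hRint t ht, hCint t ht, hPint t ht]
  · intro hx
    obtain ⟨hR, hC, hP⟩ := continuousOn_state.1 hx.1
    have hcoord (i : Fin 3) {t : ℝ} (ht : t ∈ Icc 0 T) :=
      ((hiff hx.1).1 hx i t ht).trans (congrArg _ (hintegral ht i))
    exact ⟨hR, hC, hP, fun t ht => hcoord 0 ht, fun t ht => hcoord 1 ht, fun t ht => hcoord 2 ht⟩

lemma continuousOn_transition {Y : Type*} [TopologicalSpace Y] {s : Set Y} {S : Y → ℝ}
    {x : Y → Fin 3 → ℝ} (hS : ContinuousOn S s) (hS0 : ∀ t ∈ s, S t ≠ 0)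
    (hx : ContinuousOn x s) (k : Fin 5) :
    ContinuousOn (fun t => transition lam1 lam2 a1 a2 (S t) k (x t)) s := by
  have hcoord (i : Fin 3) : ContinuousOn (fun t => x t i) s := continuousOn_pi.1 hx i
  refine continuousOn_pi.2 fun i => ?_
  fin_cases k <;> fin_cases i <;>
    simp only [transition, transfer, Fin.zero_eta, Fin.mk_one, Fin.reduceFinMk,
      Matrix.cons_val] <;> fun_prop (disch := assumption)

-- `IsSolution` does not ask for integrable right-hand sides, and these are only known to be
-- integrable as long as the total population stays away from `0`.
lemma IsSolution.total_eq (h : IsSolution T lam1 lam2 a1 a2 beta gam u1 u2 R C P)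
    (hc : IsAdmissible T M (rates beta gam u1 u2)) (h0 : 0 < R 0 + C 0 + P 0) :
    ∀ t ∈ Icc 0 T, R t + C t + P t = R 0 + C 0 + P 0 := by
  obtain ⟨hR, hC, hP, hRint, hCint, hPint⟩ := h
  have htotal : ContinuousOn (fun t => R t + C t + P t) (Icc 0 T) := (hR.add hC).add hP
  refine eqOn_const_of_eq_while_pos htotal h0 fun t ht hpos => ?_
  set F : ℝ → Fin 3 → ℝ := fun s => rateField (transition lam1 lam2 a1 a2 (R s + C s + P s))
    (rates beta gam u1 u2) s (state R C P s)
  have hsub : Icc 0 t ⊆ Icc 0 T := Icc_subset_Icc_right ht.2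
  have hstate := (continuousOn_state.2 ⟨hR, hC, hP⟩).mono hsub
  have hF : IntegrableOn F (Icc 0 t) := integrable_finsetSum _ fun k _ =>
    (hc.mono ht.2).integrableOn_smul
      (continuousOn_transition (htotal.mono hsub) (fun s hs => (hpos s hs).ne') hstate k) k
  have hFint (i : Fin 3) : IntervalIntegrable (fun s => F s i) volume 0 t :=
    (intervalIntegrable_iff_integrableOn_Icc_of_le ht.1).2 (Integrable.eval hF i)
  have hsum : ∑ i, ∫ s in (0 : ℝ)..t, F s i = 0 := by
    rw [← intervalIntegral.integral_finsetSum fun i _ => hFint i]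
    simp only [F, sum_rateField_apply fun k => sum_transition_apply k _,
      intervalIntegral.integral_zero]
  simp only [F, rateField_transition, Fin.sum_univ_three, Matrix.cons_val] at hsum
  rw [hRint t ht, hCint t ht, hPint t ht]
  linear_combination hsum

lemma Feasible.isAdmissible
    (h : Feasible T lam1 lam2 a1 a2 u1max u2max R0 C0 P0 beta gam u1 u2 R C P)
    (hgam_cont : ContinuousOn gam (Icc 0 T)) (hgam : ∀ t ∈ Icc 0 T, gam t ∈ Icc 0 G)
    (hbeta_cont : ContinuousOn beta (Icc 0 T)) (hbeta : ∀ t ∈ Icc 0 T, beta t ∈ Icc 0 B) :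
    IsAdmissible T ![1, G, B, u1max, u2max] (rates beta gam u1 u2) :=
  isAdmissible_rates hgam_cont hgam hbeta_cont hbeta h.1 h.2.1 h.2.2.1 h.2.2.2.1

lemma Feasible.memLp_u1
    (h : Feasible T lam1 lam2 a1 a2 u1max u2max R0 C0 P0 beta gam u1 u2 R C P) :
    MemLp u1 2 (volume.restrict (Icc 0 T)) :=
  memLp_Icc_of_mem_Icc h.1 h.2.2.1

lemma Feasible.memLp_u2
    (h : Feasible T lam1 lam2 a1 a2 u1max u2max R0 C0 P0 beta gam u1 u2 R C P) :
    MemLp u2 2 (volume.restrict (Icc 0 T)) :=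
  memLp_Icc_of_mem_Icc h.2.1 h.2.2.2.1

lemma Feasible.continuousOn_P
    (h : Feasible T lam1 lam2 a1 a2 u1max u2max R0 C0 P0 beta gam u1 u2 R C P) :
    ContinuousOn P (Icc 0 T) := h.2.2.2.2.1.2.2.1

lemma feasible_iff (hN : 0 < R0 + C0 + P0)
    (hc : IsAdmissible T M (rates beta gam u1 u2)) :
    Feasible T lam1 lam2 a1 a2 u1max u2max R0 C0 P0 beta gam u1 u2 R C P ↔
      Measurable u1 ∧ Measurable u2 ∧ (∀ t ∈ Icc 0 T, u1 t ∈ Icc 0 u1max) ∧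
      (∀ t ∈ Icc 0 T, u2 t ∈ Icc 0 u2max) ∧ state R C P 0 = ![R0, C0, P0] ∧
      IsTrajectory (transition lam1 lam2 a1 a2 (R0 + C0 + P0)) T (rates beta gam u1 u2)
        (state R C P) := by
  constructor
  · rintro ⟨hu1m, hu2m, hu1, hu2, hsol, rfl, rfl, rfl⟩
    exact ⟨hu1m, hu2m, hu1, hu2, rfl,
      (isSolution_iff_isTrajectory hc (hsol.total_eq hc hN)).1 hsol⟩
  · rintro ⟨hu1m, hu2m, hu1, hu2, h0, hx⟩
    have hR0 : R 0 = R0 := congrFun h0 0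
    have hC0 : C 0 = C0 := congrFun h0 1
    have hP0 : P 0 = P0 := congrFun h0 2
    refine ⟨hu1m, hu2m, hu1, hu2, (isSolution_iff_isTrajectory hc fun t ht => ?_).2 hx,
      hR0, hC0, hP0⟩
    have hsum := hx.sum_apply_eq hc continuous_transition sum_transition_apply ht
    rw [h0] at hsum
    simpa only [Fin.sum_univ_three, state, Matrix.cons_val] using hsum

lemma state_coordinates (x : ℝ → Fin 3 → ℝ) :
    state (fun s => x s 0) (fun s => x s 1) (fun s => x s 2) = x := by
  ext s i
  fin_cases i <;> rfl

lemma exists_feasible (hT : 0 ≤ T) (hlam1 : 0 ≤ lam1) (hlam2 : 0 ≤ lam2) (ha1 : a1 ∈ Icc 0 1)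
    (ha2 : a2 ∈ Icc 0 1) (hgam_cont : ContinuousOn gam (Icc 0 T))
    (hgam : ∀ t ∈ Icc 0 T, gam t ∈ Icc 0 G) (hbeta_cont : ContinuousOn beta (Icc 0 T))
    (hbeta : ∀ t ∈ Icc 0 T, beta t ∈ Icc 0 B) (hu1max : 0 ≤ u1max) (hu2max : 0 ≤ u2max)
    (hx₀ : 0 ≤ ![R0, C0, P0]) (hN : 0 < R0 + C0 + P0) :
    ∃ u1 u2 R C P, Feasible T lam1 lam2 a1 a2 u1max u2max R0 C0 P0 beta gam u1 u2 R C P := by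
  have hu1 : ∀ t ∈ Icc 0 T, (0 : ℝ) ∈ Icc 0 u1max := fun _ _ => left_mem_Icc.2 hu1max
  have hu2 : ∀ t ∈ Icc 0 T, (0 : ℝ) ∈ Icc 0 u2max := fun _ _ => left_mem_Icc.2 hu2max
  have hc := isAdmissible_rates hgam_cont hgam hbeta_cont hbeta measurable_const
    measurable_const hu1 hu2
  have hcc (k : Fin 5) :
      ContinuousOn (rates beta gam (fun _ => 0) (fun _ => 0) k) (Icc 0 T) := by
    fin_cases k
    exacts [continuousOn_const, hgam_cont, hbeta_cont, continuousOn_const, continuousOn_const]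
  obtain ⟨x, hx0, hx⟩ := exists_isTrajectory hT hc hcc locallyLipschitz_transition
    (quasiPositive_transition hlam1 hlam2 ha1 ha2 hN.le) sum_transition_apply hx₀
  rw [← state_coordinates x] at hx0 hx
  exact ⟨_, _, _, _, _,
    (feasible_iff hN hc).2 ⟨measurable_const, measurable_const, hu1, hu2, hx0, hx⟩⟩

lemma exists_feasible_limit {ι : Type*} (l : Ultrafilter ι) {u1 u2 R C P : ι → ℝ → ℝ}
    (hT : 0 ≤ T) (hlam1 : 0 ≤ lam1) (hlam2 : 0 ≤ lam2) (ha1 : a1 ∈ Icc 0 1)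
    (ha2 : a2 ∈ Icc 0 1) (hgam_cont : ContinuousOn gam (Icc 0 T))
    (hgam : ∀ t ∈ Icc 0 T, gam t ∈ Icc 0 G) (hbeta_cont : ContinuousOn beta (Icc 0 T))
    (hbeta : ∀ t ∈ Icc 0 T, beta t ∈ Icc 0 B) (hu1max : 0 ≤ u1max) (hu2max : 0 ≤ u2max)
    (hx₀ : 0 ≤ ![R0, C0, P0]) (hN : 0 < R0 + C0 + P0)
    (h : ∀ i, Feasible T lam1 lam2 a1 a2 u1max u2max R0 C0 P0 beta gam
      (u1 i) (u2 i) (R i) (C i) (P i)) :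
    ∃ v1 v2 R' C' P',
      Feasible T lam1 lam2 a1 a2 u1max u2max R0 C0 P0 beta gam v1 v2 R' C' P' ∧
      TendstoWeakly (volume.restrict (Icc 0 T)) l u1 v1 ∧
      TendstoWeakly (volume.restrict (Icc 0 T)) l u2 v2 ∧
      TendstoUniformlyOn P P' l (Icc 0 T) := by
  obtain ⟨v1, hv1m, hv1, hw1⟩ := exists_tendstoWeakly_of_mem_Icc
    (μ := volume.restrict (Icc 0 T)) l hu1max
    (fun i => (h i).1.aestronglyMeasurable)
    (fun i => ae_restrict_of_forall_mem measurableSet_Icc (h i).2.2.1)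
  obtain ⟨v2, hv2m, hv2, hw2⟩ := exists_tendstoWeakly_of_mem_Icc
    (μ := volume.restrict (Icc 0 T)) l hu2max
    (fun i => (h i).2.1.aestronglyMeasurable)
    (fun i => ae_restrict_of_forall_mem measurableSet_Icc (h i).2.2.2.1)
  have hc i := (h i).isAdmissible hgam_cont hgam hbeta_cont hbeta
  have hd := isAdmissible_rates hgam_cont hgam hbeta_cont hbeta hv1m hv2m
    (fun t (_ : t ∈ Icc 0 T) => hv1 t) (fun t _ => hv2 t)
  have htraj i := ((feasible_iff hN (hc i)).1 (h i)).2.2.2.2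
  have hweak (k : Fin 5) : TendstoWeakly (volume.restrict (Icc 0 T)) l
      (fun i => rates beta gam (u1 i) (u2 i) k) (rates beta gam v1 v2 k) := by
    fin_cases k
    exacts [.const _, .const gam, .const beta, hw1, hw2]
  obtain ⟨x, hx0, hx, hlim⟩ := exists_isTrajectory_tendstoUniformlyOn l hT
    (fun i => (htraj i).2) (fun i => (htraj i).1) hx₀ hc hd hweak locallyLipschitz_transition
    (quasiPositive_transition hlam1 hlam2 ha1 ha2 hN.le) sum_transition_apply
  rw [← state_coordinates x] at hx0 hx
  refine ⟨v1, v2, _, _, _, (feasible_iff hN hd).2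
    ⟨hv1m, hv2m, fun t _ => hv1 t, fun t _ => hv2 t, hx0, hx⟩, hw1, hw2, ?_⟩
  exact (LipschitzWith.eval 2).uniformContinuous.comp_tendstoUniformlyOn hlim

lemma exists_forall_mem_Icc_zero {f : ℝ → ℝ} (hf : ContinuousOn f (Icc 0 T))
    (hf0 : ∀ t ∈ Icc 0 T, 0 ≤ f t) : ∃ D, ∀ t ∈ Icc 0 T, f t ∈ Icc 0 D := by
  obtain ⟨D, hD⟩ := isCompact_Icc.exists_bound_of_continuousOn hf
  exact ⟨D, fun t ht => ⟨hf0 t ht, (le_abs_self _).trans (hD t ht)⟩⟩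

theorem exists_optimal_control_general (hT : 0 ≤ T) (hlam1 : 0 ≤ lam1) (hlam2 : 0 ≤ lam2)
    (ha1 : a1 ∈ Icc 0 1) (ha2 : a2 ∈ Icc 0 1) (hbeta_cont : ContinuousOn beta (Icc 0 T))
    (hbeta_nonneg : ∀ t ∈ Icc 0 T, 0 ≤ beta t) (hgam_cont : ContinuousOn gam (Icc 0 T))
    (hgam_nonneg : ∀ t ∈ Icc 0 T, 0 ≤ gam t) (hu1max : 0 ≤ u1max) (hu2max : 0 ≤ u2max)
    (hk2 : 0 ≤ k2) (hk3 : 0 ≤ k3) (hR0 : 0 ≤ R0) (hC0 : 0 ≤ C0) (hP0 : 0 ≤ P0)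
    (hN0 : 0 < R0 + C0 + P0) :
    ∃ Rs Cs Ps u1s u2s : ℝ → ℝ,
      Feasible T lam1 lam2 a1 a2 u1max u2max R0 C0 P0 beta gam u1s u2s Rs Cs Ps ∧
      ∀ R C P u1 u2 : ℝ → ℝ,
        Feasible T lam1 lam2 a1 a2 u1max u2max R0 C0 P0 beta gam u1 u2 R C P →
        cost T k1 k2 k3 Ps u1s u2s ≤ cost T k1 k2 k3 P u1 u2 := by
  obtain ⟨G, hG⟩ := exists_forall_mem_Icc_zero hgam_cont hgam_nonneg
  obtain ⟨B, hB⟩ := exists_forall_mem_Icc_zero hbeta_cont hbeta_nonneg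
  have hx₀ : 0 ≤ ![R0, C0, P0] := by
    simpa [Pi.le_def, Fin.forall_fin_succ] using ⟨hR0, hC0, hP0⟩
  let X := {q : Fin 5 → ℝ → ℝ // Feasible T lam1 lam2 a1 a2 u1max u2max R0 C0 P0 beta gam
    (q 0) (q 1) (q 2) (q 3) (q 4)}
  have : Nonempty X := by
    obtain ⟨u1, u2, R, C, P, h⟩ := exists_feasible hT hlam1 hlam2 ha1 ha2 hgam_cont hG
      hbeta_cont hB hu1max hu2max hx₀ hN0
    exact ⟨![u1, u2, R, C, P], h⟩
  obtain ⟨⟨q, hq⟩, hmin⟩ := exists_forall_le_of_ultrafilter (X := X)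
    (f := fun q => cost T k1 k2 k3 (q.1 4) (q.1 0) (q.1 1)) fun l => by
    obtain ⟨v1, v2, R, C, P, h, hv1, hv2, hP⟩ := exists_feasible_limit l hT hlam1 hlam2 ha1 ha2
      hgam_cont hG hbeta_cont hB hu1max hu2max hx₀ hN0 (fun q : X => q.2)
    exact ⟨⟨![v1, v2, R, C, P], h⟩, fun m hm => cost_le_of_eventually_le hT hk2 hk3
      (fun q => q.2.continuousOn_P) hP (fun q => q.2.memLp_u1) (fun q => q.2.memLp_u2)
      h.memLp_u1 h.memLp_u2 hv1 hv2 hm⟩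
  exact ⟨q 2, q 3, q 4, q 0, q 1, hq, fun R C P u1 u2 h => hmin ⟨![u1, u2, R, C, P], h⟩⟩

end ControlledSystem

/-- Existence of an optimal control pair together with a corresponding solution of the
initial value problem, minimizing the cost over all feasible pairs. -/
theorem exists_optimal_control
    (t_f lam1 lam2 a1 a2 u1max u2max R0 C0 P0 k1 k2 k3 : ℝ)
    (ht_f : 0 < t_f)
    (hlam1 : 0 ≤ lam1) (hlam2 : 0 ≤ lam2)
    (ha1 : a1 ∈ Icc (0:ℝ) 1) (ha2 : a2 ∈ Icc (0:ℝ) 1)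
    (beta gam : ℝ → ℝ)
    (hbeta_cont : ContinuousOn beta (Icc 0 t_f))
    (hbeta_nonneg : ∀ t ∈ Icc (0:ℝ) t_f, 0 ≤ beta t)
    (hgam_cont : ContinuousOn gam (Icc 0 t_f))
    (hgam_nonneg : ∀ t ∈ Icc (0:ℝ) t_f, 0 ≤ gam t)
    (hu1max : 0 < u1max) (hu2max : 0 < u2max)
    (hk1 : 0 < k1) (hk2 : 0 < k2) (hk3 : 0 < k3)
    (hR0 : 0 ≤ R0) (hC0 : 0 ≤ C0) (hP0 : 0 ≤ P0)
    (hN0 : 0 < R0 + C0 + P0) :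
    ∃ Rs Cs Ps u1s u2s : ℝ → ℝ,
      Feasible t_f lam1 lam2 a1 a2 u1max u2max R0 C0 P0 beta gam u1s u2s Rs Cs Ps ∧
      ∀ R C P u1 u2 : ℝ → ℝ,
        Feasible t_f lam1 lam2 a1 a2 u1max u2max R0 C0 P0 beta gam u1 u2 R C P →
        cost t_f k1 k2 k3 Ps u1s u2s ≤ cost t_f k1 k2 k3 P u1 u2 := by
  exact exists_optimal_control_general ht_f.le hlam1 hlam2 ha1 ha2 hbeta_cont hbeta_nonneg hgam_cont
    hgam_nonneg hu1max.le hu2max.le hk2.le hk3.le hR0 hC0 hP0 hN0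
end
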